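/- arXiv:1902.09146 — 3 statements merged into one kernel-verified Lean document; each statement's English description precedes it below -/
import Mathlib

section
/- Let f ∈ ℂ[x_0,…,x_n]_d with d ≥ 2 be such that the hypersurface V(f) ⊂ ℙ^n is smooth. Then the Hessian determinant hess_f = det(∂²f/∂x_i∂x_j)_{0≤i,j≤n} does not belong to the Jacobian ideal J(f) = (∂f/∂x_0,…,∂f/∂x_n). -/
/-!
By Euler's identity the Hessian matrix `H` satisfies `H x = (d - 1) ∇f`, where `x` is the vector
of the variables. Smoothness and the Nullstellensatz give `N ≥ 1` with all `x_i ^ N` in the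
Jacobian ideal, that is, a matrix `B` with `B ∇f = (x_i ^ N)_i`. Hence both `B H` and the diagonal
matrix `(d - 1) diag(x_i ^ (N - 1))` send `x` to `y = ((d - 1) x_i ^ N)_i`.

The determinant of a matrix `M` with `M x = y` depends only on `y` modulo the ideal `(y)`
(`det_sub_det_mem`): two choices of a row differ by a syzygy of the variables, which is a Koszul
syzygy (`exists_koszul`), and the cofactors `C_k` along that row satisfy `x_j C_k ≡ x_k C_j`
(`mul_adjugate_comm`). Therefore `det B * det H` is congruent to a nonzero multiple of
`∏ x_i ^ (N - 1)` modulo `(x_i ^ N)_i`. If `det H` were in the Jacobian ideal, then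
`det B * det H` would be in `(x_i ^ N)_i` by Cramer's rule, and so would `∏ x_i ^ (N - 1)`, which
is absurd since no `x_i ^ N` divides this monomial.
-/

open MvPolynomial Module

/-- The Hessian determinant `det (∂²f/∂x_i∂x_j)` of a polynomial. -/
noncomputable def hessDet {N : ℕ} (f : MvPolynomial (Fin N) ℂ) :
    MvPolynomial (Fin N) ℂ :=
  Matrix.det (Matrix.of fun i j => pderiv i (pderiv j f))

/-- The Jacobian ideal `J(f)`, generated by the first order partial derivatives of `f`. -/
noncomputable def jacobianIdeal {N : ℕ} (f : MvPolynomial (Fin N) ℂ) :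
    Ideal (MvPolynomial (Fin N) ℂ) :=
  Ideal.span (Set.range fun i => pderiv i f)

/-- If all rows of `M` except row `i` are orthogonal to `x`, then the vector of cofactors along
row `i` is proportional to `x`. -/
lemma mul_adjugate_comm {ι Q : Type*} [Fintype ι] [DecidableEq ι] [CommRing Q]
    (M : Matrix ι ι Q) (x : ι → Q) (i : ι) (h : ∀ l, l ≠ i → (M.mulVec x) l = 0) (j k : ι) :
    x j * M.adjugate k i = x k * M.adjugate j i := by
  -- With row `i` replaced by `e_k`, the matrix sends `x` to `x_k e_i`; apply its adjugate.
  set T := M.updateRow i (Pi.single k 1) with hT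
  have hTx : T.mulVec x = Pi.single i (x k) := by
    ext l
    by_cases hl : l = i
    · subst hl
      simp [hT, Matrix.mulVec]
    · have := h l hl
      simp only [Matrix.mulVec] at this
      simp [hT, Matrix.mulVec, Matrix.updateRow_ne hl, this, Pi.single_eq_of_ne hl]
  have h1 : (T.adjugate.mulVec (T.mulVec x)) j = T.det * x j := by
    rw [Matrix.mulVec_mulVec, Matrix.adjugate_mul, Matrix.smul_mulVec, Matrix.one_mulVec]
    rfl
  rw [hTx] at h1
  have h2 : T.adjugate j i = M.adjugate j i := by
    rw [Matrix.adjugate_apply, Matrix.adjugate_apply, hT, Matrix.updateRow_idem]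
  have h3 : T.det = M.adjugate k i := by rw [Matrix.adjugate_apply]
  rw [Matrix.mulVec_single, h3] at h1
  simp [h2] at h1
  linear_combination -h1

/-- Replacing row `i` by a Koszul syzygy of `x` gives a matrix of determinant zero, if the other
rows are orthogonal to `x`. -/
lemma det_updateRow_koszul {ι Q : Type*} [Fintype ι] [DecidableEq ι] [CommRing Q]
    (M : Matrix ι ι Q) (x : ι → Q) (i : ι) (h : ∀ l, l ≠ i → (M.mulVec x) l = 0)
    (u : ι → ι → Q) :
    (M.updateRow i (fun k => ∑ j, (u k j - u j k) * x j)).det = 0 := by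
  rw [← Matrix.cramer_transpose_apply, Matrix.cramer_eq_adjugate_mulVec,
    ← Matrix.adjugate_transpose]
  simp only [Matrix.mulVec, dotProduct, Matrix.transpose_apply, Finset.mul_sum]
  have e : ∀ k j, M.adjugate k i * ((u k j - u j k) * x j)
      = M.adjugate k i * (u k j * x j) - M.adjugate j i * (u j k * x k) := by
    intro k j
    linear_combination (- u j k) * mul_adjugate_comm M x i h j k
  simp only [e, Finset.sum_sub_distrib]
  rw [sub_eq_zero]
  exact Finset.sum_comm

lemma homogeneousComponent_succ_X_mul {σ : Type*} (e : ℕ) (k : σ) (p : MvPolynomial σ ℂ) :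
    homogeneousComponent (e + 1) (X k * p) = X k * homogeneousComponent e p := by
  induction p using MvPolynomial.induction_on' with
  | monomial m a =>
    have h1 : (monomial m a : MvPolynomial σ ℂ).IsHomogeneous m.degree :=
      isHomogeneous_monomial a rfl
    have h2 : (X k * monomial m a : MvPolynomial σ ℂ).IsHomogeneous (1 + m.degree) :=
      (isHomogeneous_X ℂ k).mul h1
    rw [homogeneousComponent_of_mem h1, homogeneousComponent_of_mem h2]
    by_cases he : e = m.degree
    · simp [he, add_comm]
    · rw [if_neg he, if_neg (by omega), mul_zero]
  | add p q hp hq => rw [mul_add, map_add, hp, hq, map_add, mul_add]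

/-- Every syzygy of the variables is a Koszul syzygy. For `r` homogeneous of degree `e`, Euler's
identity gives `(e + 1) r_k = ∑ j, (∂_j r_k - ∂_k r_j) x_j`. -/
lemma exists_koszul {ι : Type*} [Fintype ι] (r : ι → MvPolynomial ι ℂ)
    (hr : ∑ k, r k * X k = 0) :
    ∃ u : ι → ι → MvPolynomial ι ℂ, r = fun k => ∑ j, (u k j - u j k) * X j := by
  classical
  set D := (Finset.univ.sup fun k => (r k).totalDegree) + 1 with hD
  have hsum : ∀ k, ∑ e ∈ Finset.range D, homogeneousComponent e (r k) = r k := by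
    intro k
    conv_rhs => rw [← sum_homogeneousComponent (r k)]
    symm
    apply Finset.sum_subset
    · intro e he
      have := Finset.le_sup (f := fun k => (r k).totalDegree) (Finset.mem_univ k)
      simp only [Finset.mem_range] at he ⊢
      omega
    · intro e _ he
      apply homogeneousComponent_eq_zero
      simp only [Finset.mem_range] at he
      omega
  have hcomp : ∀ e, ∑ k, X k * homogeneousComponent e (r k) = 0 := by
    intro e
    simp only [← homogeneousComponent_succ_X_mul, ← map_sum]
    rw [← map_zero (homogeneousComponent (e + 1)), ← hr]
    simp only [mul_comm]
  have key : ∀ e k, ∑ j, (pderiv j (homogeneousComponent e (r k))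
      - pderiv k (homogeneousComponent e (r j))) * X j
        = C ((e : ℂ) + 1) * homogeneousComponent e (r k) := by
    intro e k
    have h1 := (homogeneousComponent_isHomogeneous e (r k)).sum_X_mul_pderiv
    have h2 := congrArg (pderiv k) (hcomp e)
    simp only [map_sum, map_zero, Derivation.leibniz, smul_eq_mul, pderiv_X,
      Finset.sum_add_distrib] at h2
    have h3 : ∑ j, homogeneousComponent e (r j) * (Pi.single k 1 : ι → MvPolynomial ι ℂ) j
        = homogeneousComponent e (r k) := by
      simp [Pi.single_apply]
    simp only [h3] at h2
    simp only [sub_mul, Finset.sum_sub_distrib]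
    simp only [mul_comm (X _)] at h1 h2
    rw [h1]
    simp only [nsmul_eq_mul, map_add, map_natCast, map_one]
    linear_combination -h2
  refine ⟨fun k j => ∑ e ∈ Finset.range D,
    C (((e : ℂ) + 1)⁻¹) * pderiv j (homogeneousComponent e (r k)), ?_⟩
  funext k
  conv_lhs => rw [← hsum k]
  simp only [← Finset.sum_sub_distrib, Finset.sum_mul]
  rw [Finset.sum_comm]
  refine Finset.sum_congr rfl fun e _ => ?_
  simp only [← mul_sub, mul_assoc]
  rw [← Finset.mul_sum, key, ← mul_assoc, ← C_mul, inv_mul_cancel₀, C_1, one_mul]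
  exact_mod_cast Nat.succ_ne_zero e

lemma det_updateRow_sub_det_mem {ι : Type*} [Fintype ι] [DecidableEq ι]
    (M : Matrix ι ι (MvPolynomial ι ℂ)) (y : ι → MvPolynomial ι ℂ) (hM : M.mulVec X = y)
    (i : ι) (v : ι → MvPolynomial ι ℂ) (hv : ∑ k, v k * X k = y i) :
    (M.updateRow i v).det - M.det ∈ Ideal.span (Set.range y) := by
  have hMi : ∑ k, M i k * X k = y i := congrFun hM i
  obtain ⟨u, hu⟩ := exists_koszul (v - M i) (by
    simp [sub_mul, Finset.sum_sub_distrib, hv, hMi])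
  have h1 : (M.updateRow i v).det = M.det + (M.updateRow i (v - M i)).det := by
    conv_lhs => rw [show v = M i + (v - M i) by abel]
    rw [Matrix.det_updateRow_add, Matrix.updateRow_eq_self]
  rw [h1, add_sub_cancel_left, hu, ← Ideal.Quotient.eq_zero_iff_mem, RingHom.map_det]
  set φ := Ideal.Quotient.mk (Ideal.span (Set.range y)) with hφ
  have h2 : φ.mapMatrix (M.updateRow i fun k => ∑ j, (u k j - u j k) * X j)
      = (φ.mapMatrix M).updateRow i
        (fun k => ∑ j, (φ (u k j) - φ (u j k)) * φ (X j)) := by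
    ext a b
    by_cases ha : a = i
    · subst ha; simp
    · simp [Matrix.updateRow_ne ha]
  rw [h2]
  refine det_updateRow_koszul _ (fun j => φ (X j)) i (fun l _ => ?_) (fun k j => φ (u k j))
  have h3 : φ (y l) = 0 :=
    Ideal.Quotient.eq_zero_iff_mem.mpr (Ideal.subset_span ⟨l, rfl⟩)
  have h4 : φ ((M.mulVec X) l) = 0 := by rw [congrFun hM l, h3]
  simpa [Matrix.mulVec, dotProduct] using h4

/-- A matrix carrying the variables to `y` has a determinant determined by `y` modulo `(y)`. -/
lemma det_sub_det_mem {ι : Type*} [Fintype ι] [DecidableEq ι]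
    (M M' : Matrix ι ι (MvPolynomial ι ℂ)) (y : ι → MvPolynomial ι ℂ)
    (hM : M.mulVec X = y) (hM' : M'.mulVec X = y) :
    M'.det - M.det ∈ Ideal.span (Set.range y) := by
  -- Exchange the rows one at a time, `S` being the set of rows already exchanged.
  have key : ∀ S : Finset ι, (Matrix.of fun i => if i ∈ S then M' i else M i).det - M.det
      ∈ Ideal.span (Set.range y) := by
    intro S
    induction S using Finset.induction_on with
    | empty =>
      have : (Matrix.of fun i => if i ∈ (∅ : Finset ι) then M' i else M i) = M := by
        ext; simp
      rw [this, sub_self]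
      exact zero_mem _
    | insert a S ha ih =>
      set T : Matrix ι ι (MvPolynomial ι ℂ) := Matrix.of fun i => if i ∈ S then M' i else M i
        with hT
      have h1 : (Matrix.of fun i => if i ∈ insert a S then M' i else M i)
          = T.updateRow a (M' a) := by
        ext l m
        by_cases hl : l = a
        · subst hl; simp
        · simp [hT, hl]
      have hTx : T.mulVec X = y := by
        ext1 l
        by_cases hl : l ∈ S
        · rw [← congrFun hM' l]
          simp [Matrix.mulVec, hT, hl]
        · rw [← congrFun hM l]
          simp [Matrix.mulVec, hT, hl]
      have h2 := det_updateRow_sub_det_mem T y hTx a (M' a) (congrFun hM' a)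
      rw [h1]
      simpa using add_mem h2 ih
  have := key Finset.univ
  have h0 : (Matrix.of fun i => if i ∈ (Finset.univ : Finset ι) then M' i else M i) = M' := by
    ext; simp
  rwa [h0] at this

lemma prod_X_pow_notMem {ι : Type*} [Fintype ι] (N : ℕ) :
    (∏ i : ι, (X i : MvPolynomial ι ℂ) ^ N) ∉
      Ideal.span (Set.range fun i : ι => (X i : MvPolynomial ι ℂ) ^ (N + 1)) := by
  classical
  intro h
  have h1 : (Set.range fun i : ι => (X i : MvPolynomial ι ℂ) ^ (N + 1))
      = (fun s => monomial s (1 : ℂ)) '' Set.range fun i : ι => Finsupp.single i (N + 1) := by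
    rw [← Set.range_comp]
    congr 1
    funext i
    simp [X_pow_eq_monomial]
  have h2 : (∏ i : ι, (X i : MvPolynomial ι ℂ) ^ N)
      = monomial (∑ i : ι, Finsupp.single i N) 1 := by
    simp only [X_pow_eq_monomial]
    rw [monomial_sum_one]
  rw [h1, h2, mem_ideal_span_monomial_image] at h
  obtain ⟨s, ⟨i, rfl⟩, hs⟩ := h (∑ i : ι, Finsupp.single i N) (by simp [MvPolynomial.mem_support_iff])
  have := hs i
  simp [Finsupp.finsetSum_apply, Finsupp.single_apply] at this

/-- By the Nullstellensatz, polynomials whose only possible common zero is the origin generate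
an ideal containing a common positive power of all the variables. -/
lemma exists_X_pow_mem {ι : Type*} [Fintype ι] (g : ι → MvPolynomial ι ℂ)
    (hg : ∀ x : ι → ℂ, x ≠ 0 → ∃ i, eval x (g i) ≠ 0) :
    ∃ N : ℕ, ∀ i, (X i : MvPolynomial ι ℂ) ^ (N + 1) ∈ Ideal.span (Set.range g) := by
  have h1 : ∀ i, ∃ N : ℕ, (X i : MvPolynomial ι ℂ) ^ N ∈ Ideal.span (Set.range g) := by
    intro i
    have : (X i : MvPolynomial ι ℂ) ∈ (Ideal.span (Set.range g)).radical := by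
      rw [← vanishingIdeal_zeroLocus_eq_radical (K := ℂ), mem_vanishingIdeal_iff]
      intro x hx
      by_cases hx0 : x = 0
      · simp [hx0]
      · obtain ⟨j, hj⟩ := hg x hx0
        exact absurd (hx (g j) (Ideal.subset_span ⟨j, rfl⟩)) (by simpa [aeval_eq_eval] using hj)
    exact this
  choose N hN using h1
  refine ⟨∑ i, N i, fun i => ?_⟩
  refine Ideal.pow_mem_of_pow_mem _ (hN i) ?_
  have := Finset.single_le_sum (f := N) (fun _ _ => Nat.zero_le _) (Finset.mem_univ i)
  omega

lemma pderiv_pderiv_comm {σ : Type*} (i j : σ) (p : MvPolynomial σ ℂ) :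
    pderiv i (pderiv j p) = pderiv j (pderiv i p) := by
  classical
  -- The commutator of two derivations is a derivation, and this one kills the variables.
  have h : ⁅(pderiv i : Derivation ℂ (MvPolynomial σ ℂ) (MvPolynomial σ ℂ)),
      (pderiv j : Derivation ℂ (MvPolynomial σ ℂ) (MvPolynomial σ ℂ))⁆ = 0 := by
    refine derivation_ext fun k => ?_
    simp [Derivation.commutator_apply, pderiv_X, Pi.single_apply, apply_ite]
  have := congrArg (fun D => D p) h
  simpa [Derivation.commutator_apply, sub_eq_zero] using this

/-- **Proposition.** If `f` is homogeneous of degree `d ≥ 2` and the hypersurface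
`V(f) ⊂ ℙ^n` is smooth (the partial derivatives of `f` have no common zero in
`ℂ^{n+1} ∖ {0}`), then the Hessian determinant of `f` does not belong to the
Jacobian ideal `J(f)`. -/
theorem hessian_not_mem_jacobian_of_smooth
    {n d : ℕ} (hd : 2 ≤ d)
    (f : MvPolynomial (Fin (n + 1)) ℂ) (hf : f.IsHomogeneous d)
    (hsm : ∀ x : Fin (n + 1) → ℂ, x ≠ 0 →
      ∃ i : Fin (n + 1), eval x (pderiv i f) ≠ 0) :
    hessDet f ∉ jacobianIdeal f := by
  intro hmem
  unfold hessDet at hmem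
  unfold jacobianIdeal at hmem
  set g : Fin (n + 1) → MvPolynomial (Fin (n + 1)) ℂ := fun i => pderiv i f with hg
  set H : Matrix (Fin (n + 1)) (Fin (n + 1)) (MvPolynomial (Fin (n + 1)) ℂ) :=
    Matrix.of fun i j => pderiv i (pderiv j f) with hH
  obtain ⟨N, hN⟩ := exists_X_pow_mem g hsm
  simp only [Ideal.mem_span_range_iff_exists_fun] at hN
  choose B hB using hN
  have hc : ((d - 1 : ℕ) : ℂ) ≠ 0 := by
    have : d - 1 ≠ 0 := by omega
    exact_mod_cast this
  set c : MvPolynomial (Fin (n + 1)) ℂ := C ((d - 1 : ℕ) : ℂ) with hcdef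
  have hcu : IsUnit c := (isUnit_iff_ne_zero.mpr hc).map C
  have hHx : H.mulVec X = c • g := by
    ext1 i
    have h1 := (hf.pderiv (i := i)).sum_X_mul_pderiv
    have h2 : ∀ j, pderiv i (pderiv j f) = pderiv j (pderiv i f) := fun j => pderiv_pderiv_comm i j f
    simp only [Matrix.mulVec, dotProduct, hH, Matrix.of_apply, h2, Pi.smul_apply, smul_eq_mul, hg]
    simp only [mul_comm (X _)] at h1
    rw [h1, hcdef, map_natCast, nsmul_eq_mul]
  set P : Fin (n + 1) → MvPolynomial (Fin (n + 1)) ℂ := fun i => X i ^ (N + 1) with hP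
  set I := Ideal.span (Set.range P) with hI
  have hBg : (Matrix.of B).mulVec g = P := by
    ext1 i
    exact hB i
  have hM : (Matrix.of B * H).mulVec X = c • P := by
    rw [← Matrix.mulVec_mulVec, hHx, Matrix.mulVec_smul, hBg]
  have hD : (Matrix.diagonal fun i => c * X i ^ N).mulVec X = c • P := by
    ext1 i
    simp only [Matrix.mulVec_diagonal, hP, Pi.smul_apply, smul_eq_mul]
    ring
  have hle : Ideal.span (Set.range (c • P)) ≤ I := by
    rw [Ideal.span_le]
    rintro _ ⟨i, rfl⟩
    exact I.mul_mem_left c (Ideal.subset_span ⟨i, rfl⟩)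
  have hdiff := hle (det_sub_det_mem _ _ _ hM hD)
  -- Cramer's rule: `det B` carries the Jacobian ideal into `(x_i ^ (N + 1))_i`.
  have hdetB : (Matrix.of B).det * H.det ∈ I := by
    obtain ⟨a, ha⟩ := Ideal.mem_span_range_iff_exists_fun.mp hmem
    rw [← ha, Finset.mul_sum]
    refine sum_mem fun i _ => ?_
    have h1 : (Matrix.of B).det * g i = ((Matrix.of B).adjugate.mulVec P) i := by
      rw [← hBg, Matrix.mulVec_mulVec, Matrix.adjugate_mul, Matrix.smul_mulVec,
        Matrix.one_mulVec]
      rfl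
    rw [mul_left_comm, h1]
    simp only [Matrix.mulVec, dotProduct]
    refine I.mul_mem_left _ (sum_mem fun j _ => ?_)
    exact I.mul_mem_left _ (Ideal.subset_span ⟨j, rfl⟩)
  rw [Matrix.det_mul, Matrix.det_diagonal, Finset.prod_mul_distrib, Finset.prod_const] at hdiff
  have h5 := add_mem hdiff hdetB
  rw [sub_add_cancel] at h5
  exact prod_X_pow_notMem N ((Ideal.unit_mul_mem_iff_mem I (hcu.pow _)).mp h5)
end

section
/- Let f ∈ ℂ[x_0,…,x_n]_d be a reduced homogeneous polynomial such that the hypersurface V(f) ⊂ ℙ^n is singular but has only isolated singularities (its singular locus is a nonempty finite set). Then the Hessian determinant hess_f = det(∂²f/∂x_i∂x_j)_{0≤i,j≤n} belongs to the Jacobian ideal J(f) = (∂f/∂x_0,…,∂f/∂x_n). -/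
/-!
Let `F_i = ∂f/∂x_i`. By Euler's relation `(d - 1) F = H x`, where `H` is the Hessian matrix. The
theorem is an instance of a general fact, `det_mem_span_of_common_zero`: if homogeneous forms
`F = A x` have a common zero `p ≠ 0`, then `det A ∈ (F)`.

For its proof, fix a large `r`, write `𝔪 = (x_i)`, and perturb `F` to the generators
`x_i ^ (r+1) + F_i` of an ideal `q`. They equal `A' x` with `A' = A + diag (x_i ^ r)`, so
`𝔪 · det A' ⊆ q` by Cramer's rule. The quotient by `q` is a finite-dimensional Frobenius algebra
(`exists_frobenius_form`); its linear form is the global residue with respect to the generators,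
which is given by an explicit sum of coefficients because the leading forms are `x_i ^ (r+1)`.

Put `𝔞 = (F) + 𝔪 ^ r ⊇ q`. If `det A'` were not in `𝔞`, Frobenius duality would give `v` with
`v 𝔞 ⊆ q` and `v det A' ∉ q`. The latter forces `v` to have a nonzero constant term. Then
`v x_j ^ r ∈ q ⊆ (F) + 𝔪 ^ (r+1)` for each `j`, and comparing the parts of degree `r` yields
`x_j ^ r ∈ (F)`, which is impossible for `p_j ≠ 0`. Hence `det A' ∈ 𝔞`, and so
`det A ∈ (F) + 𝔪 ^ r`. As `det A` is homogeneous of degree less than `r`, it lies in `(F)`.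
-/

open MvPolynomial Module

/-- The singular locus of `V(f)`, viewed as the set of lines (points of `ℙ^n`)
spanned by nonzero vectors at which all first order partial derivatives of `f` vanish. -/
noncomputable def singularLines {N : ℕ} (f : MvPolynomial (Fin N) ℂ) :
    Set (Submodule ℂ (Fin N → ℂ)) :=
  {L | ∃ x : Fin N → ℂ, x ≠ 0 ∧ L = Submodule.span ℂ {x} ∧
    ∀ i : Fin N, eval x (pderiv i f) = 0}

set_option linter.unusedSectionVars false

/-! ### The residue form of the perturbed ideal -/

section Residue

variable {σ : Type*} [Fintype σ] [DecidableEq σ]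

/-- The ideal generated by the `x_i ^ (r + 1) + F_i`. When the `F_i` have degree at most `r`, it is
a complete intersection whose leading forms are the powers `x_i ^ (r + 1)`. -/
noncomputable def pertIdeal (r : ℕ) (F : σ → MvPolynomial σ ℂ) : Ideal (MvPolynomial σ ℂ) :=
  Ideal.span (Set.range fun i => X i ^ (r + 1) + F i)

/-- The exponent vector `(r, …, r)`, the largest one with all entries at most `r`. -/
noncomputable def topExp (σ : Type*) [Fintype σ] (r : ℕ) : σ →₀ ℕ :=
  Finsupp.equivFunOnFinite.symm fun _ => r

/-- The exponent vector `(r + 1)(k + 1) - 1`, whose coefficient the `k`-th term of the residue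
extracts. -/
noncomputable def resExp (r : ℕ) (k : σ → ℕ) : σ →₀ ℕ :=
  Finsupp.equivFunOnFinite.symm fun i => (r + 1) * k i + r

/-- The truncated global residue
`g ↦ ∑_k (-1)^|k| [x^((r+1)(k+1)-1)] (g F^k)`, with `k` in the box `[0, M)^σ`. The sum over all `k`
is the residue of `g / ∏ (x_i ^ (r+1) + F_i)`, obtained by expanding each factor as a geometric
series in `F_i / x_i ^ (r+1)`; for fixed `g` only finitely many terms are nonzero, so truncation at a
large `M` loses nothing. -/
noncomputable def truncRes (r M : ℕ) (F : σ → MvPolynomial σ ℂ) : MvPolynomial σ ℂ →ₗ[ℂ] ℂ :=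
  ∑ k ∈ Fintype.piFinset (fun _ : σ => Finset.range M),
    ((-1 : ℂ) ^ (∑ i, k i)) • (lcoeff ℂ (resExp r k) ∘ₗ LinearMap.mulRight ℂ (∏ i, F i ^ k i))

theorem truncRes_apply (r M : ℕ) (F : σ → MvPolynomial σ ℂ) (g : MvPolynomial σ ℂ) :
    truncRes r M F g = ∑ k ∈ Fintype.piFinset (fun _ : σ => Finset.range M),
      (-1 : ℂ) ^ (∑ i, k i) * coeff (resExp r k) (g * ∏ i, F i ^ k i) := by
  simp [truncRes, lcoeff]

theorem degree_topExp (r : ℕ) : (topExp σ r).degree = Fintype.card σ * r := by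
  simp [topExp, Finsupp.degree_eq_sum]

theorem degree_resExp (r : ℕ) (k : σ → ℕ) :
    (resExp r k).degree = (r + 1) * ∑ i, k i + Fintype.card σ * r := by
  simp [resExp, Finsupp.degree_eq_sum, Finset.sum_add_distrib, Finset.mul_sum]

theorem coeff_eq_zero_of_lt_degree {g : MvPolynomial σ ℂ} {m : σ →₀ ℕ}
    (h : g.totalDegree < m.degree) : coeff m g = 0 :=
  coeff_eq_zero_of_totalDegree_lt h

theorem totalDegree_prod_pow_le {r : ℕ} {F : σ → MvPolynomial σ ℂ}
    (hF : ∀ i, (F i).totalDegree ≤ r) (k : σ → ℕ) :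
    (∏ i, F i ^ k i).totalDegree ≤ r * ∑ i, k i := by
  refine (totalDegree_finsetProd _ _).trans ?_
  rw [Finset.mul_sum]
  refine Finset.sum_le_sum fun i _ => (totalDegree_pow _ _).trans ?_
  rw [mul_comm]
  exact Nat.mul_le_mul_right _ (hF i)

/-- The `k`-th residue term vanishes for degree reasons as soon as `deg g < |σ| r + |k|`. -/
theorem coeff_resExp_mul_eq_zero {r : ℕ} {F : σ → MvPolynomial σ ℂ}
    (hF : ∀ i, (F i).totalDegree ≤ r) (k : σ → ℕ) {g : MvPolynomial σ ℂ}
    (hg : g.totalDegree < Fintype.card σ * r + ∑ i, k i) :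
    coeff (resExp r k) (g * ∏ i, F i ^ k i) = 0 := by
  apply coeff_eq_zero_of_lt_degree
  have h1 := totalDegree_mul g (∏ i, F i ^ k i)
  have h2 := totalDegree_prod_pow_le hF k
  rw [degree_resExp]
  linarith

theorem truncRes_low {r M : ℕ} {F : σ → MvPolynomial σ ℂ}
    (hF : ∀ i, (F i).totalDegree ≤ r) {g : MvPolynomial σ ℂ}
    (hg : g.totalDegree < Fintype.card σ * r) : truncRes r M F g = 0 := by
  rw [truncRes_apply]
  refine Finset.sum_eq_zero fun k _ => ?_
  rw [coeff_resExp_mul_eq_zero hF k (by omega), mul_zero]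

theorem truncRes_top {r M : ℕ} (hM : 0 < M) {F : σ → MvPolynomial σ ℂ}
    (hF : ∀ i, (F i).totalDegree ≤ r) : truncRes r M F (monomial (topExp σ r) 1) = 1 := by
  rw [truncRes_apply, Finset.sum_eq_single 0]
  · have : resExp r (0 : σ → ℕ) = topExp σ r := by simp [resExp, topExp]
    simp [this]
  · intro k _ hk
    rw [coeff_resExp_mul_eq_zero hF k, mul_zero]
    have : 0 < ∑ i, k i := by
      obtain ⟨i, hi⟩ := Function.ne_iff.mp hk
      exact Finset.sum_pos' (fun _ _ => Nat.zero_le _) ⟨i, Finset.mem_univ _, Nat.pos_of_ne_zero hi⟩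
    have h1 := totalDegree_monomial_le (topExp σ r) (1 : ℂ)
    have h2 : (monomial (topExp σ r) (1 : ℂ)).totalDegree ≤ (topExp σ r).degree := h1
    rw [degree_topExp] at h2
    omega
  · intro h
    simp [hM] at h

theorem resExp_add_single (r : ℕ) (k : σ → ℕ) (i : σ) :
    resExp r (k + Pi.single i 1) = resExp r k + Finsupp.single i (r + 1) := by
  ext j
  by_cases h : j = i
  · subst h; simp [resExp]; ring
  · simp [resExp, h, Pi.single_apply]

/-- The residue kills multiples of the generators: the terms coming from `x_i ^ (r+1)` and `F_i`
telescope in the `i`-th coordinate of `k`, and the boundary term at `k_i = M - 1` vanishes for degree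
reasons. -/
theorem truncRes_mul_gen {r M : ℕ} {F : σ → MvPolynomial σ ℂ}
    (hF : ∀ i, (F i).totalDegree ≤ r) (g : MvPolynomial σ ℂ) (i : σ)
    (hM : g.totalDegree + r + 1 < M) : truncRes r M F (g * (X i ^ (r + 1) + F i)) = 0 := by
  set B := Fintype.piFinset (fun _ : σ => Finset.range M) with hB
  set a : (σ → ℕ) → ℂ := fun k =>
    (-1 : ℂ) ^ (∑ i, k i) * coeff (resExp r k) (g * X i ^ (r + 1) * ∏ i, F i ^ k i) with ha
  set b : (σ → ℕ) → ℂ := fun k =>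
    (-1 : ℂ) ^ (∑ i, k i) * coeff (resExp r k) (g * F i * ∏ i, F i ^ k i) with hb
  have hsplit : truncRes r M F (g * (X i ^ (r + 1) + F i)) = ∑ k ∈ B, a k + ∑ k ∈ B, b k := by
    rw [truncRes_apply, ← Finset.sum_add_distrib]
    refine Finset.sum_congr rfl fun k _ => ?_
    simp only [ha, hb, mul_add, add_mul, coeff_add]
  have hsum (k : σ → ℕ) : ∑ j, (k + Pi.single i 1 : σ → ℕ) j = ∑ j, k j + 1 := by
    simp [Finset.sum_add_distrib]
  have hshift (k : σ → ℕ) : a (k + Pi.single i 1) = - b k := by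
    have h1 : ∏ j, F j ^ (k + Pi.single i 1 : σ → ℕ) j = F i * ∏ j, F j ^ k j := by
      have : ∏ j, F j ^ (Pi.single i 1 : σ → ℕ) j = F i := by
        rw [Finset.prod_eq_single i]
        · simp
        · intro j _ hj; simp [hj]
        · simp
      simp only [Pi.add_apply, pow_add, Finset.prod_mul_distrib, this, mul_comm]
    have h2 : g * X i ^ (r + 1) * (F i * ∏ j, F j ^ k j) =
        (g * F i * ∏ j, F j ^ k j) * monomial (Finsupp.single i (r + 1)) 1 := by
      rw [X_pow_eq_monomial]; ring
    simp only [ha, hb]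
    rw [hsum, h1, h2, resExp_add_single, coeff_mul_monomial, pow_succ]
    ring
  have hzero (k : σ → ℕ) (hk : k i = 0) : a k = 0 := by
    have h2 : g * X i ^ (r + 1) * ∏ j, F j ^ k j =
        (g * ∏ j, F j ^ k j) * monomial (Finsupp.single i (r + 1)) 1 := by
      rw [X_pow_eq_monomial]; ring
    simp only [ha]
    rw [h2, coeff_mul_monomial', if_neg, mul_zero]
    intro h
    have := h i
    simp [resExp, hk] at this
  have hlarge (k : σ → ℕ) (hk : M ≤ k i + 1) : b k = 0 := by
    simp only [hb]
    rw [coeff_resExp_mul_eq_zero hF k, mul_zero]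
    have h1 := totalDegree_mul g (F i)
    have h2 := hF i
    have h3 : k i ≤ ∑ j, k j := Finset.single_le_sum (fun _ _ => Nat.zero_le _) (Finset.mem_univ i)
    omega
  have key : ∑ k ∈ B, b k = ∑ k ∈ B, - a k := by
    refine Finset.sum_bij_ne_zero (fun k _ _ => k + Pi.single i 1) ?_ ?_ ?_ ?_
    · intro k hk hbk
      have hlt : k i + 1 < M := by
        by_contra h
        exact hbk (hlarge k (by omega))
      simp only [hB, Fintype.mem_piFinset, Finset.mem_range] at hk ⊢
      intro j
      by_cases hj : j = i
      · subst hj; simpa using hlt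
      · simpa [hj] using hk j
    · intro k₁ _ _ k₂ _ _ h
      exact add_right_cancel h
    · intro k hk hak
      have hki : k i ≠ 0 := fun h => hak (by rw [hzero k h, neg_zero])
      have hkk : k - Pi.single i 1 + Pi.single i 1 = k := by
        funext j
        by_cases hj : j = i
        · subst hj; simp; omega
        · simp [hj]
      refine ⟨k - Pi.single i 1, ?_, ?_, hkk⟩
      · simp only [hB, Fintype.mem_piFinset, Finset.mem_range] at hk ⊢
        intro j
        exact lt_of_le_of_lt (Nat.sub_le _ _) (hk j)
      · rw [← neg_ne_zero, ← hshift, hkk]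
        exact fun h => hak (by rw [h, neg_zero])
    · intro k _ _
      rw [hshift, neg_neg]
  rw [hsplit, key, Finset.sum_neg_distrib, add_neg_cancel]

/-- There is a linear form that kills the ideal and all polynomials of degree below `|σ| r`, and
takes the value `1` on the top monomial `x^(r,…,r)`. The truncated residues show that this monomial
does not lie in the sum of the two subspaces. -/
theorem exists_residue {r : ℕ} {F : σ → MvPolynomial σ ℂ}
    (hF : ∀ i, (F i).totalDegree ≤ r) (hr : 0 < Fintype.card σ * r) :
    ∃ τ : MvPolynomial σ ℂ →ₗ[ℂ] ℂ, (∀ g ∈ pertIdeal r F, τ g = 0) ∧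
      (∀ g : MvPolynomial σ ℂ, g.totalDegree < Fintype.card σ * r → τ g = 0) ∧
      τ (monomial (topExp σ r) 1) = 1 := by
  set V : Submodule ℂ (MvPolynomial σ ℂ) := (pertIdeal r F).restrictScalars ℂ ⊔
    restrictTotalDegree σ ℂ (Fintype.card σ * r - 1) with hV
  have hnot : monomial (topExp σ r) 1 ∉ V := by
    intro h
    obtain ⟨y, hy, z, hz, hyz⟩ := Submodule.mem_sup.mp h
    rw [Submodule.restrictScalars_mem] at hy
    obtain ⟨c, hc⟩ := (Submodule.mem_span_range_iff_exists_fun (MvPolynomial σ ℂ)).mp hy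
    rw [mem_restrictTotalDegree] at hz
    set M := ∑ i, (c i).totalDegree + r + 2 with hM
    have h1 := truncRes_top (M := M) (by omega) hF
    rw [← hyz, map_add, truncRes_low hF (by omega : z.totalDegree < _), ← hc, map_sum,
      Finset.sum_eq_zero] at h1
    · simp at h1
    · intro i _
      rw [smul_eq_mul]
      apply truncRes_mul_gen hF
      have : (c i).totalDegree ≤ ∑ i, (c i).totalDegree :=
        Finset.single_le_sum (f := fun i => (c i).totalDegree)
          (fun _ _ => Nat.zero_le _) (Finset.mem_univ i)
      omega
  obtain ⟨φ, hφ, hle⟩ := Submodule.exists_le_ker_of_notMem hnot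
  refine ⟨(φ (monomial (topExp σ r) 1))⁻¹ • φ, fun g hg => ?_, fun g hg => ?_, ?_⟩
  · have : φ g = 0 := hle (Submodule.mem_sup_left hg)
    simp [this]
  · have : φ g = 0 := hle (Submodule.mem_sup_right
      ((mem_restrictTotalDegree _ _ _).mpr (by omega)))
    simp [this]
  · simp [hφ]

/-! ### Reduction modulo the ideal and Frobenius duality -/

/-- Modulo the ideal, a monomial divisible by `x_i ^ (r+1)` equals `-x^(m - (r+1)e_i) F_i`, of
smaller degree. -/
theorem monomial_add_mem {r : ℕ} {F : σ → MvPolynomial σ ℂ} {m : σ →₀ ℕ} {i : σ}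
    (hi : r < m i) :
    monomial m 1 + monomial (m - Finsupp.single i (r + 1)) 1 * F i ∈ pertIdeal r F := by
  have h : monomial m 1 + monomial (m - Finsupp.single i (r + 1)) 1 * F i =
      monomial (m - Finsupp.single i (r + 1)) 1 * (X i ^ (r + 1) + F i) := by
    rw [mul_add, X_pow_eq_monomial, monomial_mul, mul_one, tsub_add_cancel_of_le]
    rw [Finsupp.single_le_iff]
    exact hi
  rw [h]
  exact Ideal.mul_mem_left _ _ (Ideal.subset_span ⟨i, rfl⟩)

theorem totalDegree_reduction_lt {r : ℕ} {F : σ → MvPolynomial σ ℂ}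
    (hF : ∀ i, (F i).totalDegree ≤ r) {m : σ →₀ ℕ} {i : σ} (hi : r < m i) :
    (monomial (m - Finsupp.single i (r + 1)) 1 * F i).totalDegree < m.degree := by
  have hle : Finsupp.single i (r + 1) ≤ m := by
    rw [Finsupp.single_le_iff]
    exact hi
  have h1 := totalDegree_mul (monomial (m - Finsupp.single i (r + 1)) 1) (F i)
  have h2 : (monomial (m - Finsupp.single i (r + 1)) (1 : ℂ)).totalDegree ≤
      (m - Finsupp.single i (r + 1)).degree := totalDegree_monomial_le _ _
  have h3 : (m - Finsupp.single i (r + 1)).degree + (r + 1) = m.degree := by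
    conv_rhs => rw [← tsub_add_cancel_of_le hle]
    rw [map_add, Finsupp.degree_single]
  have := hF i
  omega

/-- The span of the monomials all of whose exponents are at most `r`. -/
noncomputable def boxSpan (σ : Type*) (r : ℕ) : Submodule ℂ (MvPolynomial σ ℂ) :=
  restrictSupport ℂ {m : σ →₀ ℕ | ∀ i, m i ≤ r}

theorem mem_boxSpan {r : ℕ} {g : MvPolynomial σ ℂ} :
    g ∈ boxSpan σ r ↔ ∀ m ∈ g.support, ∀ i, m i ≤ r := by
  rw [boxSpan, mem_restrictSupport_iff]
  rfl

theorem monomial_mem_boxSpan {r : ℕ} {m : σ →₀ ℕ} (hm : ∀ i, m i ≤ r) (c : ℂ) :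
    monomial m c ∈ boxSpan σ r := by
  rw [mem_boxSpan]
  intro m' hm'
  rw [Finset.mem_singleton.mp (support_monomial_subset hm')]
  exact hm

instance finite_boxSpan (r : ℕ) : Module.Finite ℂ (boxSpan σ r) := by
  have hfin : {m : σ →₀ ℕ | ∀ i, m i ≤ r}.Finite := by
    refine (Set.finite_Iic (topExp σ r)).subset fun m hm i => ?_
    simpa [topExp] using hm i
  have : boxSpan σ r = Submodule.span ℂ
      ((fun m => monomial m (1 : ℂ)) '' {m : σ →₀ ℕ | ∀ i, m i ≤ r}) := by
    apply le_antisymm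
    · intro g hg
      rw [mem_boxSpan] at hg
      rw [g.as_sum]
      refine Submodule.sum_mem _ fun m hm => ?_
      rw [← mul_one (coeff m g), ← smul_eq_mul, ← smul_monomial]
      exact Submodule.smul_mem _ _ (Submodule.subset_span ⟨m, hg m hm, rfl⟩)
    · rw [Submodule.span_le]
      rintro _ ⟨m, hm, rfl⟩
      exact monomial_mem_boxSpan hm 1
  rw [this]
  exact FiniteDimensional.span_of_finite ℂ (hfin.image _)

/-- Every polynomial reduces modulo the ideal to one whose exponents are all at most `r`. -/
theorem mem_pertIdeal_sup_boxSpan {r : ℕ} {F : σ → MvPolynomial σ ℂ}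
    (hF : ∀ i, (F i).totalDegree ≤ r) (g : MvPolynomial σ ℂ) :
    g ∈ (pertIdeal r F).restrictScalars ℂ ⊔ boxSpan σ r := by
  induction hd : g.totalDegree using Nat.strong_induction_on generalizing g with
  | _ d ih =>
    rw [g.as_sum]
    refine Submodule.sum_mem _ fun m hm => ?_
    rw [← mul_one (coeff m g), ← smul_eq_mul, ← smul_monomial]
    refine Submodule.smul_mem _ _ ?_
    by_cases hbox : ∀ i, m i ≤ r
    · exact Submodule.mem_sup_right (monomial_mem_boxSpan hbox 1)
    · push Not at hbox
      obtain ⟨i, hi⟩ := hbox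
      have hmd : m.degree ≤ d := hd ▸ le_totalDegree hm
      have h1 := ih _ ((totalDegree_reduction_lt hF hi).trans_le hmd) _ rfl
      have h2 : monomial m 1 + monomial (m - Finsupp.single i (r + 1)) 1 * F i ∈
          (pertIdeal r F).restrictScalars ℂ ⊔ boxSpan σ r :=
        Submodule.mem_sup_left (monomial_add_mem hi)
      simpa using Submodule.sub_mem _ h2 h1

/-- In degree at most `|σ| r`, the top monomial is the only one on which the residue form is
nonzero. -/
theorem residue_monomial_eq_zero {r : ℕ} {F : σ → MvPolynomial σ ℂ}
    (hF : ∀ i, (F i).totalDegree ≤ r) {τ : MvPolynomial σ ℂ →ₗ[ℂ] ℂ}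
    (hτ : ∀ g ∈ pertIdeal r F, τ g = 0)
    (hlow : ∀ g : MvPolynomial σ ℂ, g.totalDegree < Fintype.card σ * r → τ g = 0)
    {m : σ →₀ ℕ} (hm : m.degree ≤ Fintype.card σ * r) (hne : m ≠ topExp σ r) :
    τ (monomial m 1) = 0 := by
  by_cases hbox : ∀ i, m i ≤ r
  · apply hlow
    refine lt_of_le_of_lt (totalDegree_monomial_le _ _) ?_
    change m.degree < _
    rw [← degree_topExp, Finsupp.degree_eq_sum, Finsupp.degree_eq_sum]
    obtain ⟨i, hi⟩ := Finsupp.ne_iff.mp hne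
    refine Finset.sum_lt_sum (fun j _ => by simpa [topExp] using hbox j)
      ⟨i, Finset.mem_univ _, lt_of_le_of_ne (by simpa [topExp] using hbox i) hi⟩
  · push Not at hbox
    obtain ⟨i, hi⟩ := hbox
    have h1 := hτ _ (monomial_add_mem (F := F) hi)
    rwa [map_add, hlow _ ((totalDegree_reduction_lt hF hi).trans_le hm), add_zero] at h1

/-- The residue pairing on `boxSpan` is nondegenerate: if `x^α` is a monomial of maximal degree in
`b`, the complementary monomial `x^((r,…,r) - α)` pairs with `b` to the coefficient of `x^α`. -/
theorem exists_residue_mul_ne_zero {r : ℕ} {F : σ → MvPolynomial σ ℂ}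
    (hF : ∀ i, (F i).totalDegree ≤ r) {τ : MvPolynomial σ ℂ →ₗ[ℂ] ℂ}
    (hτ : ∀ g ∈ pertIdeal r F, τ g = 0)
    (hlow : ∀ g : MvPolynomial σ ℂ, g.totalDegree < Fintype.card σ * r → τ g = 0)
    (htop : τ (monomial (topExp σ r) 1) = 1)
    {b : MvPolynomial σ ℂ} (hb : b ∈ boxSpan σ r) (hb0 : b ≠ 0) :
    ∃ w ∈ boxSpan σ r, τ (b * w) ≠ 0 := by
  obtain ⟨α, hα, hmax⟩ := Finset.exists_max_image b.support (fun m => m.degree)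
    (support_nonempty.mpr hb0)
  rw [mem_boxSpan] at hb
  have hαtop : α ≤ topExp σ r := fun i => by simpa [topExp] using hb α hα i
  refine ⟨monomial (topExp σ r - α) 1, monomial_mem_boxSpan (fun i => ?_) 1, ?_⟩
  · simp [topExp]
  have hcoeff : τ (b * monomial (topExp σ r - α) 1) = coeff α b := by
    conv_lhs => rw [b.as_sum]
    rw [Finset.sum_mul, map_sum, Finset.sum_eq_single α]
    · rw [monomial_mul, add_tsub_cancel_of_le hαtop, ← smul_eq_mul, ← smul_monomial, map_smul,
        htop, smul_eq_mul, mul_one]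
    · intro m hm hne
      rw [monomial_mul, ← smul_eq_mul, ← smul_monomial, map_smul,
        residue_monomial_eq_zero hF hτ hlow, smul_zero]
      · have h1 := hmax m hm
        have h2 : (topExp σ r - α).degree + α.degree = (topExp σ r).degree := by
          rw [← map_add, tsub_add_cancel_of_le hαtop]
        rw [map_add, ← degree_topExp]
        omega
      · intro h
        apply hne
        have h2 : α + (topExp σ r - α) = topExp σ r := add_tsub_cancel_of_le hαtop
        exact add_right_cancel (h.trans h2.symm)
    · intro h; exact absurd hα h
  rw [hcoeff]
  exact mem_support_iff.mp hα

/-- The quotient by `pertIdeal r F` is a Frobenius algebra: it carries a linear form `τ` such that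
`(g, w) ↦ τ (g w)` is nondegenerate on the quotient, and every linear form on the quotient is
`τ (v · )` for some `v`. -/
theorem exists_frobenius_form {r : ℕ} {F : σ → MvPolynomial σ ℂ}
    (hF : ∀ i, (F i).totalDegree ≤ r) (hr : 0 < Fintype.card σ * r) :
    ∃ τ : MvPolynomial σ ℂ →ₗ[ℂ] ℂ, (∀ g ∈ pertIdeal r F, τ g = 0) ∧
      (∀ g, (∀ w, τ (g * w) = 0) → g ∈ pertIdeal r F) ∧
      ∀ φ : MvPolynomial σ ℂ →ₗ[ℂ] ℂ, (∀ g ∈ pertIdeal r F, φ g = 0) →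
        ∃ v, ∀ g, φ g = τ (v * g) := by
  obtain ⟨τ, hτ, hlow, htop⟩ := exists_residue hF hr
  refine ⟨τ, hτ, fun g hg => ?_, fun φ hφ => ?_⟩
  · obtain ⟨y, hy, b, hb, rfl⟩ := Submodule.mem_sup.mp (mem_pertIdeal_sup_boxSpan hF g)
    rw [Submodule.restrictScalars_mem] at hy
    have hb0 : b = 0 := by
      by_contra hne
      obtain ⟨w, -, hw⟩ := exists_residue_mul_ne_zero hF hτ hlow htop hb hne
      have h1 := hg w
      rw [add_mul, map_add, hτ _ (Ideal.mul_mem_right _ _ hy), zero_add] at h1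
      exact hw h1
    simpa [hb0] using hy
  · let Φ : boxSpan σ r →ₗ[ℂ] Module.Dual ℂ (boxSpan σ r) :=
      ((LinearMap.mul ℂ (MvPolynomial σ ℂ)).compr₂ τ).domRestrict₁₂ (boxSpan σ r) (boxSpan σ r)
    have hΦ (a b : boxSpan σ r) : Φ a b = τ (a * b) := rfl
    have hinj : Function.Injective Φ := by
      rw [injective_iff_map_eq_zero]
      intro b hb
      by_contra hne
      obtain ⟨w, hwb, hw⟩ := exists_residue_mul_ne_zero hF hτ hlow htop b.2
        (fun h => hne (Subtype.ext h))
      exact hw (by rw [← hΦ b ⟨w, hwb⟩, hb]; rfl)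
    have hsurj : Function.Surjective Φ :=
      (LinearMap.injective_iff_surjective_of_finrank_eq_finrank
        Subspace.dual_finrank_eq.symm).mp hinj
    obtain ⟨v, hv⟩ := hsurj (φ.domRestrict (boxSpan σ r))
    refine ⟨v, fun g => ?_⟩
    obtain ⟨y, hy, b, hb, rfl⟩ := Submodule.mem_sup.mp (mem_pertIdeal_sup_boxSpan hF g)
    rw [Submodule.restrictScalars_mem] at hy
    rw [mul_add, map_add, map_add, hφ y hy, hτ _ (Ideal.mul_mem_left _ _ hy)]
    have := LinearMap.congr_fun hv ⟨b, hb⟩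
    rw [hΦ] at this
    simpa using this.symm

end Residue

/-! ### The determinant lies in the ideal -/

section Socle

variable {σ : Type*} [Fintype σ] [DecidableEq σ]

attribute [local instance] MvPolynomial.gradedAlgebra

/-- Modulo a homogeneous ideal, high powers of the irrelevant ideal do not contribute in low
degree. -/
theorem mem_of_mem_sup_pow_idealOfVars {F : σ → MvPolynomial σ ℂ} {e : ℕ}
    (hF : ∀ i, (F i).IsHomogeneous e) {g : MvPolynomial σ ℂ} {t s : ℕ} (hg : g.IsHomogeneous t)
    (hts : t < s) (h : g ∈ Ideal.span (Set.range F) ⊔ idealOfVars σ ℂ ^ s) :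
    g ∈ Ideal.span (Set.range F) := by
  have hI : (Ideal.span (Set.range F)).IsHomogeneous (homogeneousSubmodule σ ℂ) := by
    apply Ideal.homogeneous_span
    rintro _ ⟨i, rfl⟩
    exact ⟨e, hF i⟩
  obtain ⟨y, hy, z, hz, rfl⟩ := Submodule.mem_sup.mp h
  have hz0 : homogeneousComponent t z = 0 := by
    apply homogeneousComponent_eq_zero'
    intro m hm
    have := (mem_pow_idealOfVars_iff s z).mp hz m hm
    omega
  rw [← homogeneousComponent_eq_self hg, map_add, hz0, add_zero]
  exact homogeneousComponent_mem_of_mem hI hy t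

theorem isHomogeneous_det {A : Matrix σ σ (MvPolynomial σ ℂ)} {t : ℕ}
    (hA : ∀ i j, (A i j).IsHomogeneous t) : A.det.IsHomogeneous (Fintype.card σ * t) := by
  rw [Matrix.det_apply]
  refine IsHomogeneous.sum _ _ _ fun π _ => ?_
  have h : (∏ i, A (π i) i).IsHomogeneous (∑ _i : σ, t) :=
    IsHomogeneous.prod _ _ _ fun i _ => hA _ _
  rw [Finset.sum_const, Finset.card_univ, smul_eq_mul] at h
  rcases Int.units_eq_one_or (Equiv.Perm.sign π) with hs | hs
  · simpa [hs] using h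
  · simpa [hs] using h.neg

/-- Cramer's rule: if the entries of `B x` lie in `I`, so do the `det B * x_j`. -/
theorem det_mul_mem_of_mulVec {R : Type*} [CommRing R] (I : Ideal R) (B : Matrix σ σ R) (x : σ → R)
    (h : ∀ i, (B.mulVec x) i ∈ I) (j : σ) : B.det * x j ∈ I := by
  have h1 : B.adjugate.mulVec (B.mulVec x) = B.det • x := by
    rw [Matrix.mulVec_mulVec, Matrix.adjugate_mul, Matrix.smul_mulVec, Matrix.one_mulVec]
  have h2 : B.det * x j = ∑ i, B.adjugate j i * (B.mulVec x) i := by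
    have := congrFun h1 j
    simpa [Matrix.mulVec, dotProduct] using this.symm
  rw [h2]
  exact Ideal.sum_mem _ fun i _ => Ideal.mul_mem_left _ _ (h i)

theorem det_add_diagonal_sub_mem {R : Type*} [CommRing R] (I : Ideal R) (A : Matrix σ σ R)
    (y : σ → R) (hy : ∀ i, y i ∈ I) : (A + Matrix.diagonal y).det - A.det ∈ I := by
  rw [← Ideal.Quotient.eq, RingHom.map_det, RingHom.map_det]
  congr 1
  ext i j
  simp only [RingHom.mapMatrix_apply, Matrix.map_apply, Matrix.add_apply, map_add]
  by_cases hij : i = j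
  · subst hij
    simp [Ideal.Quotient.eq_zero_iff_mem.mpr (hy i)]
  · simp [hij]

/-- If homogeneous forms `F = A x` of equal degree have a common zero other than the origin, then
`det A` lies in the ideal they generate. -/
theorem det_mem_span_of_common_zero {F : σ → MvPolynomial σ ℂ} {e t : ℕ}
    (hF : ∀ i, (F i).IsHomogeneous e) {A : Matrix σ σ (MvPolynomial σ ℂ)}
    (hA : ∀ i j, (A i j).IsHomogeneous t) (hAF : A.mulVec X = F)
    {p : σ → ℂ} (hp : p ≠ 0) (hpF : ∀ i, eval p (F i) = 0) :
    A.det ∈ Ideal.span (Set.range F) := by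
  obtain ⟨j, hj⟩ := Function.ne_iff.mp hp
  set r := e + Fintype.card σ * t + 1 with hr
  have hcard : 0 < Fintype.card σ := Fintype.card_pos_iff.mpr ⟨j⟩
  have hFr (i : σ) : (F i).totalDegree ≤ r := (hF i).totalDegree_le.trans (by omega)
  have hXpow (i : σ) (s : ℕ) : (X i : MvPolynomial σ ℂ) ^ s ∈ idealOfVars σ ℂ ^ s :=
    Ideal.pow_mem_pow (Ideal.subset_span (Set.mem_range_self i)) s
  set 𝔞 := Ideal.span (Set.range F) ⊔ idealOfVars σ ℂ ^ r with h𝔞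
  have hqle : pertIdeal r F ≤ Ideal.span (Set.range F) ⊔ idealOfVars σ ℂ ^ (r + 1) := by
    refine Ideal.span_le.mpr ?_
    rintro _ ⟨i, rfl⟩
    exact add_mem (Ideal.mem_sup_right (hXpow i _))
      (Ideal.mem_sup_left (Ideal.subset_span ⟨i, rfl⟩))
  have hq𝔞 : pertIdeal r F ≤ 𝔞 :=
    hqle.trans (sup_le_sup_left (Ideal.pow_le_pow_right (Nat.le_succ r)) _)
  -- `A'` expresses the generators `x_i ^ (r+1) + F_i` through the variables
  set A' := A + Matrix.diagonal (fun i => (X i : MvPolynomial σ ℂ) ^ r) with hA'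
  have hsoc (i : σ) : A'.det * X i ∈ pertIdeal r F := by
    refine det_mul_mem_of_mulVec _ A' X (fun i => ?_) i
    have hi : A'.mulVec X i = X i ^ (r + 1) + F i := by
      rw [hA', Matrix.add_mulVec, Pi.add_apply, hAF, Matrix.mulVec_diagonal,
        pow_succ (X i) r, add_comm]
    rw [hi]
    exact Ideal.subset_span (Set.mem_range_self i)
  have hdet' : A'.det ∈ 𝔞 := by
    by_contra hnot
    obtain ⟨τ, hτ, hnd, hrep⟩ := exists_frobenius_form hFr (Nat.mul_pos hcard (by omega))
    obtain ⟨φ, hφ, hle⟩ := Submodule.exists_le_ker_of_notMem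
      (p := 𝔞.restrictScalars ℂ) (v := A'.det) hnot
    have hφ𝔞 (g : MvPolynomial σ ℂ) (hg : g ∈ 𝔞) : φ g = 0 := hle hg
    obtain ⟨v, hv⟩ := hrep φ fun g hg => hφ𝔞 g (hq𝔞 hg)
    have hv𝔞 (g : MvPolynomial σ ℂ) (hg : g ∈ 𝔞) : v * g ∈ pertIdeal r F := by
      refine hnd _ fun w => ?_
      rw [mul_assoc, ← hv]
      exact hφ𝔞 _ (Ideal.mul_mem_right _ _ hg)
    -- `v` annihilates `𝔞` modulo `pertIdeal r F` but does not annihilate `det A'`, which is killed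
    -- by all variables; hence `v` has a nonzero constant term
    have hvm : v - C (coeff 0 v) ∈ idealOfVars σ ℂ := by
      rw [← pow_one (idealOfVars σ ℂ), mem_pow_idealOfVars_iff']
      intro m hm
      have : m = 0 := by
        rw [← Finsupp.degree_eq_zero_iff]; omega
      simp [this]
    have hmdet (g : MvPolynomial σ ℂ) (hg : g ∈ idealOfVars σ ℂ) :
        A'.det * g ∈ pertIdeal r F := by
      have : idealOfVars σ ℂ ≤ (pertIdeal r F).colon {A'.det} := by
        refine Ideal.span_le.mpr ?_
        rintro _ ⟨i, rfl⟩
        rw [SetLike.mem_coe, Submodule.mem_colon_singleton, smul_eq_mul, mul_comm]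
        exact hsoc i
      have h1 := this hg
      rwa [Submodule.mem_colon_singleton, smul_eq_mul, mul_comm] at h1
    have hv0 : coeff 0 v ≠ 0 := by
      intro h0
      apply hφ
      rw [h0, map_zero, sub_zero] at hvm
      rw [hv, mul_comm]
      exact hτ _ (hmdet v hvm)
    -- since `v * x_j ^ r` lies in `(F) + 𝔪 ^ (r+1)`, comparing degrees puts `x_j ^ r` into `(F)`,
    -- although it does not vanish at `p`
    have h1 : C (coeff 0 v) * X j ^ r ∈
        Ideal.span (Set.range F) ⊔ idealOfVars σ ℂ ^ (r + 1) := by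
      have h2 := hqle (hv𝔞 (X j ^ r) (Ideal.mem_sup_right (hXpow j r)))
      have h3 : (v - C (coeff 0 v)) * X j ^ r ∈
          Ideal.span (Set.range F) ⊔ idealOfVars σ ℂ ^ (r + 1) := by
        apply Ideal.mem_sup_right
        rw [pow_succ']
        exact Ideal.mul_mem_mul hvm (hXpow j r)
      have h4 := sub_mem h2 h3
      rwa [← sub_mul, sub_sub_cancel] at h4
    have h5 := mem_of_mem_sup_pow_idealOfVars hF (isHomogeneous_C_mul_X_pow _ j r)
      (Nat.lt_succ_self r) h1
    have h6 : Ideal.span (Set.range F) ≤ RingHom.ker (eval p) := by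
      refine Ideal.span_le.mpr ?_
      rintro _ ⟨i, rfl⟩
      exact hpF i
    have h7 : eval p (C (coeff 0 v) * X j ^ r) = 0 := h6 h5
    simp only [map_mul, eval_C, map_pow, eval_X] at h7
    exact mul_ne_zero hv0 (pow_ne_zero _ hj) h7
  refine mem_of_mem_sup_pow_idealOfVars hF (isHomogeneous_det hA) (s := r) (by omega) ?_
  have h8 : A'.det - A.det ∈ 𝔞 :=
    Ideal.mem_sup_right (det_add_diagonal_sub_mem _ A _ fun i => hXpow i r)
  simpa using sub_mem hdet' h8

end Socle

/-- **Proposition.** If `f` is a reduced homogeneous polynomial whose hypersurface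
`V(f) ⊂ ℙ^n` is singular but has only isolated singularities (the singular locus is a
nonempty finite set of points of `ℙ^n`), then the Hessian determinant of `f` belongs to
the Jacobian ideal `J(f)`. -/
theorem hessian_mem_jacobian_of_isolated_singularities
    {n d : ℕ} (f : MvPolynomial (Fin (n + 1)) ℂ)
    (hf : f.IsHomogeneous d) (hred : Squarefree f)
    (hsing : (singularLines f).Nonempty)
    (hfin : (singularLines f).Finite) :
    hessDet f ∈ jacobianIdeal f := by
  obtain ⟨-, p, hp, -, hpf⟩ := hsing
  set H : Matrix (Fin (n + 1)) (Fin (n + 1)) (MvPolynomial (Fin (n + 1)) ℂ) :=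
    Matrix.of fun i j => pderiv i (pderiv j f) with hH
  have hdet : hessDet f = H.det := rfl
  have hHom (i j : Fin (n + 1)) : (H i j).IsHomogeneous (d - 1 - 1) := hf.pderiv.pderiv
  have hEuler : H.transpose.mulVec X = (d - 1) • fun i => pderiv i f := by
    funext i
    rw [Pi.smul_apply, ← (hf.pderiv (i := i)).sum_X_mul_pderiv]
    simp [hH, Matrix.mulVec, dotProduct, mul_comm]
  have key := det_mem_span_of_common_zero (F := fun i => ((d - 1 : ℕ) : ℂ) • pderiv i f)
    (e := d - 1) (t := d - 1 - 1) (A := H.transpose) (p := p)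
    (fun i => (homogeneousSubmodule _ _ _).smul_mem _ hf.pderiv) (fun i j => hHom j i)
    (by rw [hEuler]; funext i; rw [Pi.smul_apply, Nat.cast_smul_eq_nsmul]) hp
    (fun i => by rw [smul_eval, hpf i, mul_zero])
  rw [Matrix.det_transpose] at key
  rw [hdet]
  refine Ideal.span_le.mpr ?_ key
  rintro _ ⟨i, rfl⟩
  exact Submodule.smul_of_tower_mem _ _ (Ideal.subset_span ⟨i, rfl⟩)
end

section
/- Let d = 2d' with d' ≥ 2 and let f ∈ ℂ[x_0,x_1,x_2]_d be such that the plane curve V(f) ⊂ ℙ^2 is smooth. Then for a generic linear form ℓ ∈ R_1 (in particular, for at least one linear form ℓ), multiplication by ℓ² induces an isomorphism of ℂ-vector spaces M(f)_{3d'−4} → M(f)_{3d'−2}. -/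
/-!
Let `g₀, g₁, g₂` be the partial derivatives of `f`, forms of degree `e = 2d' - 1`. Smoothness and the
Nullstellensatz give powers of all variables in the Jacobian ideal `J`, so the Koszul complex of `g`
is exact in the middle: `g` has no syzygy of degree less than `e` (`syzygy_eq_zero`). This yields the
dimensions of the two graded pieces, which agree (`finrank_gradedPiece_eq`), and it remains to show
that multiplication by `ℓ ^ 2` is injective for the generic form `ℓ = x₂ - s x₀ - t x₁` with `s, t`
indeterminates; the determinant of multiplication by `ℓ ^ 2`, as a polynomial in the coefficients of
`ℓ`, is then nonzero (`generic_mul_bijective`).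

Suppose `ℓ ^ 2 h = ∑ aᵢ gᵢ` with `aᵢ` of degree `d' - 1` in the `x`-variables. Modulo `ℓ ^ 2` this is a
syzygy of `g` on the first order neighbourhood of the generic line `ℓ = 0`, that is, a pair `(a, b)`
of degrees `d' - 1` and `d' - 2`, where `a` is a syzygy on the line and `b` is the normal derivative.
Differentiating the relation for `a` by `s` and by `t`, and eliminating with the relation for `b`,
gives the further syzygies `∂_s a - x₀ b` and `∂_t a - x₁ b` on the line, of degree `d' - 1`. Two
syzygies on the line whose degrees add up to less than `e` are proportional, as their cross product
is a multiple of `g` (`proportional_of_syzygies`); here the sum is at most `2d' - 2 < e`. Hence `a` is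
proportional to `D a`, where `D = x₁ ∂_s - x₀ ∂_t` is differentiation along the pencil of lines
through a point. Dividing by the common factor of the entries of `a`, one obtains a syzygy killed
by `D`, because `D` lowers the degree in `s, t`. Such a syzygy is constant along the pencils, so it
comes from a syzygy of `g` on the plane, of degree less than `e`, and vanishes
(`eq_zero_of_proportional_pencilDer`). Then `a = 0`, so `b` is itself a syzygy on the line, and the
same argument for `b` and `D b` gives `b = 0`. Consequently `ℓ ^ 2` divides all `aᵢ`, and `h` lies in
`J` (`first_order_vanishing`, `mem_of_sq_mul_mem`).
-/

open MvPolynomial Module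

/-- The degree-`m` graded piece of the quotient `R ⧸ I`, namely the image of the
space of homogeneous polynomials of degree `m`. -/
noncomputable def gradedPiece {N : ℕ} (I : Ideal (MvPolynomial (Fin N) ℂ)) (m : ℕ) :
    Submodule ℂ (MvPolynomial (Fin N) ℂ ⧸ I) :=
  Submodule.map (Ideal.Quotient.mkₐ ℂ I).toLinearMap (homogeneousSubmodule (Fin N) ℂ m)

/-! ### Syzygies of three ternary forms without common zero -/

/-- If `G` generates an ideal containing `p` and `q`, where `q` is a nonzerodivisor modulo `p`, then
every vector proportional to `G` is a multiple of `G`: the ideal `(G)` has depth at least two. -/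
lemma exists_mul_of_proportional {B : Type*} [CommRing B] [IsDomain B] {p q : B} (hp : p ≠ 0)
    (hpq : ∀ y, p ∣ q * y → p ∣ y) (G v c c' : Fin 3 → B)
    (h : p = ∑ i, c i * G i) (h' : q = ∑ i, c' i * G i)
    (hv : ∀ i j, v i * G j = v j * G i) : ∃ l, ∀ i, v i = l * G i := by
  have key : ∀ d : Fin 3 → B, ∀ j, (∑ i, d i * G i) * v j = (∑ i, d i * v i) * G j := by
    intro d j
    rw [Finset.sum_mul, Finset.sum_mul]
    exact Finset.sum_congr rfl fun i _ => by linear_combination (d i) * hv j i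
  have h0 := key c
  have h1 := key c'
  rw [← h] at h0
  rw [← h'] at h1
  obtain ⟨j, hj⟩ : ∃ j, G j ≠ 0 := by
    by_contra! hG
    exact hp (by simp [h, hG])
  have h2 : q * (∑ i, c i * v i) = p * (∑ i, c' i * v i) :=
    mul_right_cancel₀ hj (by linear_combination p * h1 j - q * h0 j)
  obtain ⟨l, hl⟩ := hpq _ ⟨_, h2⟩
  refine ⟨l, fun i => mul_left_cancel₀ hp ?_⟩
  rw [h0, hl]; ring

lemma X_pow_dvd_of_dvd_mul {σ : Type*} {i j : σ} (hij : i ≠ j) (N : ℕ)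
    (y : MvPolynomial σ ℂ) (h : (X i : MvPolynomial σ ℂ) ^ N ∣ X j ^ N * y) :
    (X i : MvPolynomial σ ℂ) ^ N ∣ y := by
  have hp : Prime (X i : MvPolynomial σ ℂ) := MvPolynomial.X_prime
  refine hp.pow_dvd_of_dvd_mul_left N (fun hd => ?_) h
  have := hp.dvd_of_dvd_pow hd
  rw [MvPolynomial.X_dvd_X] at this
  simp_all

/-- `x₂ ^ N` is a nonzerodivisor modulo `(x₀ ^ N, x₁ ^ N)`. -/
lemma mem_span_X_pow (N : ℕ) (y u v : MvPolynomial (Fin 3) ℂ)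
    (h : X 2 ^ N * y = X 1 ^ N * u + X 0 ^ N * v) :
    ∃ u' v', y = X 1 ^ N * u' + X 0 ^ N * v' := by
  let S : Set (Fin 3 →₀ ℕ) := {Finsupp.single 1 N, Finsupp.single 0 N}
  have hS : ((fun s => monomial s (1 : ℂ)) '' S) = {X 1 ^ N, X 0 ^ N} := by
    simp [S, Set.image_pair, X_pow_eq_monomial]
  have hmem : ∀ z : MvPolynomial (Fin 3) ℂ, z ∈ Ideal.span ((fun s => monomial s (1 : ℂ)) '' S) ↔
      ∃ u' v', z = X 1 ^ N * u' + X 0 ^ N * v' := by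
    intro z
    rw [hS, Ideal.mem_span_pair]
    constructor
    · rintro ⟨a, b, h⟩; exact ⟨a, b, by rw [← h]; ring⟩
    · rintro ⟨a, b, h⟩; exact ⟨a, b, by rw [h]; ring⟩
  rw [← hmem, mem_ideal_span_monomial_image]
  have h1 := (hmem _).2 ⟨u, v, h⟩
  rw [mem_ideal_span_monomial_image] at h1
  intro m hm
  obtain ⟨s, hs, hle⟩ := h1 (Finsupp.single 2 N + m) (by
    rw [MvPolynomial.mem_support_iff] at hm ⊢
    rw [X_pow_eq_monomial, coeff_monomial_mul]
    simpa using hm)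
  refine ⟨s, hs, fun i => ?_⟩
  have := hle i
  have h0 := hle 2
  rcases hs with rfl | rfl <;> fin_cases i <;> simp_all

lemma coeff_mul_eq_zero_of_degree_lt {e : ℕ} {g : MvPolynomial (Fin 3) ℂ} (hg : g.IsHomogeneous e)
    (r : MvPolynomial (Fin 3) ℂ) (n : Fin 3 →₀ ℕ) (hn : n.degree < e) : coeff n (g * r) = 0 := by
  rw [coeff_mul]
  refine Finset.sum_eq_zero fun x hx => ?_
  rw [hg.coeff_eq_zero, zero_mul]
  rw [Finset.HasAntidiagonal.mem_antidiagonal] at hx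
  have := congrArg Finsupp.degree hx
  rw [map_add] at this
  omega

/-- Three ternary forms of degree `e` that generate an ideal containing powers of all the variables have
no nonzero syzygy of degree less than `e`. The proof is exactness of the Koszul complex in its
middle spot: every syzygy is of the form `g × r`, hence has no term of degree less than `e`. -/
lemma syzygy_eq_zero {e N : ℕ} (g : Fin 3 → MvPolynomial (Fin 3) ℂ)
    (hg : ∀ i, (g i).IsHomogeneous e) (c : Fin 3 → Fin 3 → MvPolynomial (Fin 3) ℂ)
    (hc : ∀ i, X i ^ N = ∑ l, c i l * g l)
    (s : Fin 3 → MvPolynomial (Fin 3) ℂ) (hs : ∑ l, s l * g l = 0)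
    (hdeg : ∀ i, (s i).totalDegree < e) : s = 0 := by
  have hX : ∀ i : Fin 3, (X i : MvPolynomial (Fin 3) ℂ) ^ N ≠ 0 := fun i => pow_ne_zero _ (X_ne_zero i)
  -- The contraction of the syzygy `s` with the relation expressing `x_i ^ N` through `g`.
  let τ : Fin 3 → Fin 3 → MvPolynomial (Fin 3) ℂ := fun i => crossProduct s (c i)
  simp only [Fin.sum_univ_three] at hs
  have hc' := hc
  simp only [Fin.sum_univ_three] at hc'
  -- `g × τ i = x_i ^ N s`
  have hτ : ∀ i, crossProduct g (τ i) = fun l => X i ^ N * s l := by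
    intro i
    ext1 l
    fin_cases l <;> simp [τ, cross_apply, hc' i]
    · linear_combination (-c i 0) * hs
    · linear_combination (-c i 1) * hs
    · linear_combination (-c i 2) * hs
  have hex : ∀ i j, ∃ l, ∀ k, X j ^ N * τ i k - X i ^ N * τ j k = l * g k := by
    intro i j
    refine exists_mul_of_proportional (hX 0) (X_pow_dvd_of_dvd_mul (by decide : (0 : Fin 3) ≠ 1) N)
      g (fun k => X j ^ N * τ i k - X i ^ N * τ j k) (c 0) (c 1) (hc 0) (hc 1) ?_
    have hi := hτ i
    have hj := hτ j
    rw [cross_apply, funext_iff, Fin.forall_fin_succ, Fin.forall_fin_succ] at hi hj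
    simp at hi hj
    obtain ⟨i0, i1, i2⟩ := hi
    obtain ⟨j0, j1, j2⟩ := hj
    intro a b
    fin_cases a <;> fin_cases b <;> simp
    · linear_combination (X i ^ N * j2 - X j ^ N * i2)
    · linear_combination (-X i ^ N * j1 + X j ^ N * i1)
    · linear_combination (-X i ^ N * j2 + X j ^ N * i2)
    · linear_combination (X i ^ N * j0 - X j ^ N * i0)
    · linear_combination (X i ^ N * j1 - X j ^ N * i1)
    · linear_combination (-X i ^ N * j0 + X j ^ N * i0)
  obtain ⟨l01, h01⟩ := hex 0 1
  obtain ⟨l12, h12⟩ := hex 1 2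
  obtain ⟨l02, h02⟩ := hex 0 2
  obtain ⟨j, hj⟩ : ∃ j, g j ≠ 0 := by
    by_contra! hG
    exact hX 0 (by simp [hc, hG])
  -- Cocycle relation between the multipliers: it makes `l01` a coboundary.
  have hco : X 2 ^ N * l01 = X 1 ^ N * l02 + X 0 ^ N * (-l12) :=
    mul_right_cancel₀ hj (by
      linear_combination -X 2 ^ N * h01 j + X 1 ^ N * h02 j - X 0 ^ N * h12 j)
  obtain ⟨u, v, huv⟩ := mem_span_X_pow N _ _ _ hco
  have hρ : ∀ k, ∃ r, τ 0 k - u * g k = X 0 ^ N * r := fun k =>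
    X_pow_dvd_of_dvd_mul (by decide : (0 : Fin 3) ≠ 1) N _
      ⟨τ 1 k + v * g k, by linear_combination h01 k + g k * huv⟩
  choose r hr using hρ
  have hfin : s = crossProduct g r := by
    have h0 := hτ 0
    rw [cross_apply, funext_iff, Fin.forall_fin_succ, Fin.forall_fin_succ] at h0
    simp at h0
    obtain ⟨i0, i1, i2⟩ := h0
    ext1 k
    fin_cases k <;> simp [cross_apply] <;> refine mul_left_cancel₀ (hX 0) ?_
    · linear_combination -i0 + g 1 * hr 2 - g 2 * hr 1
    · linear_combination -i1 + g 2 * hr 0 - g 0 * hr 2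
    · linear_combination -i2 + g 0 * hr 1 - g 1 * hr 0
  funext k
  ext n
  by_cases hn : n.degree < e
  · rw [hfin, cross_apply]
    fin_cases k <;> simp [coeff_mul_eq_zero_of_degree_lt (hg _) _ n hn]
  · rw [Pi.zero_apply, coeff_zero]
    by_contra hne
    have h1 := le_totalDegree (MvPolynomial.mem_support_iff.2 hne)
    have h2 : (n.sum fun _ e => e) = n.degree := rfl
    have := hdeg k
    omega

/-! ### Weighted degrees in four variables -/

/-- The substitution `x_i ↦ x_i T ^ w i`, which records the weight of each monomial as a power of
a new variable `T`. -/
noncomputable def weightHom (w : Fin 4 → ℕ) :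
    MvPolynomial (Fin 4) ℂ →ₐ[ℂ] Polynomial (MvPolynomial (Fin 4) ℂ) :=
  aeval fun i => Polynomial.C (X i) * Polynomial.X ^ w i

/-- The degree of a polynomial in four variables for the weights `w` (with value `0` at `0`). -/
noncomputable def wdeg (w : Fin 4 → ℕ) (p : MvPolynomial (Fin 4) ℂ) : ℕ :=
  (weightHom w p).natDegree

lemma weightHom_monomial (w : Fin 4 → ℕ) (m : Fin 4 →₀ ℕ) (a : ℂ) :
    weightHom w (monomial m a) =
      Polynomial.C (monomial m a) * Polynomial.X ^ (Finsupp.weight w m) := by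
  rw [weightHom, aeval_monomial, Finsupp.weight_apply, monomial_eq (s := m)]
  simp only [mul_pow, map_mul, Finsupp.prod, map_prod, map_pow, Finsupp.sum,
    smul_eq_mul, ← pow_mul, Finset.prod_mul_distrib, Finset.prod_pow_eq_pow_sum]
  rw [← mul_assoc]
  simp only [mul_comm (w _)]
  rfl

lemma coeff_coeff_weightHom (w : Fin 4 → ℕ) (p : MvPolynomial (Fin 4) ℂ) (n : ℕ)
    (m : Fin 4 →₀ ℕ) : coeff m ((weightHom w p).coeff n) =
      if Finsupp.weight w m = n then coeff m p else 0 := by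
  classical
  induction p using MvPolynomial.induction_on' with
  | add p q hp hq =>
    rw [map_add, Polynomial.coeff_add, coeff_add, hp, hq, coeff_add]
    split_ifs <;> simp
  | monomial u a =>
    rw [weightHom_monomial, Polynomial.coeff_C_mul_X_pow, coeff_monomial]
    by_cases hu : u = m
    · subst hu
      by_cases hn : n = Finsupp.weight w u
      · simp [hn]
      · simp [hn, Ne.symm hn]
    · split_ifs <;> simp [hu]

lemma weight_le_wdeg {w : Fin 4 → ℕ} {p : MvPolynomial (Fin 4) ℂ} {m : Fin 4 →₀ ℕ}
    (hm : coeff m p ≠ 0) : Finsupp.weight w m ≤ wdeg w p := by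
  apply Polynomial.le_natDegree_of_ne_zero
  intro h
  have := coeff_coeff_weightHom w p (Finsupp.weight w m) m
  rw [h, if_pos rfl, coeff_zero] at this
  exact hm this.symm

lemma wdeg_le {w : Fin 4 → ℕ} {p : MvPolynomial (Fin 4) ℂ} {n : ℕ}
    (h : ∀ m, coeff m p ≠ 0 → Finsupp.weight w m ≤ n) : wdeg w p ≤ n := by
  rw [wdeg, Polynomial.natDegree_le_iff_coeff_eq_zero]
  intro k hk
  ext m
  rw [coeff_coeff_weightHom, coeff_zero]
  split_ifs with hm
  · by_contra hne
    have := h m hne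
    omega
  · rfl

lemma weightHom_injective (w : Fin 4 → ℕ) : Function.Injective (weightHom w) := by
  rw [injective_iff_map_eq_zero]
  intro p hp
  ext m
  have := coeff_coeff_weightHom w p (Finsupp.weight w m) m
  rw [hp, if_pos rfl, Polynomial.coeff_zero, coeff_zero] at this
  rw [← this, coeff_zero]

lemma wdeg_add_le {w : Fin 4 → ℕ} {p q : MvPolynomial (Fin 4) ℂ} {n : ℕ}
    (hp : wdeg w p ≤ n) (hq : wdeg w q ≤ n) : wdeg w (p + q) ≤ n := by
  rw [wdeg, map_add]
  exact (Polynomial.natDegree_add_le _ _).trans (max_le hp hq)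

lemma wdeg_sub_le {w : Fin 4 → ℕ} {p q : MvPolynomial (Fin 4) ℂ} {n : ℕ}
    (hp : wdeg w p ≤ n) (hq : wdeg w q ≤ n) : wdeg w (p - q) ≤ n := by
  rw [wdeg, map_sub]
  exact (Polynomial.natDegree_sub_le _ _).trans (max_le hp hq)

lemma wdeg_sum_le {ι : Type*} (s : Finset ι) {w : Fin 4 → ℕ} {p : ι → MvPolynomial (Fin 4) ℂ}
    {n : ℕ} (hp : ∀ i ∈ s, wdeg w (p i) ≤ n) : wdeg w (∑ i ∈ s, p i) ≤ n := by
  rw [wdeg, map_sum]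
  exact Polynomial.natDegree_sum_le_of_forall_le s _ hp

lemma wdeg_mul_le {w : Fin 4 → ℕ} {p q : MvPolynomial (Fin 4) ℂ} {n k : ℕ}
    (hp : wdeg w p ≤ n) (hq : wdeg w q ≤ k) : wdeg w (p * q) ≤ n + k := by
  rw [wdeg, map_mul]
  exact Polynomial.natDegree_mul_le.trans (add_le_add hp hq)

lemma wdeg_le_of_dvd {w : Fin 4 → ℕ} {p q : MvPolynomial (Fin 4) ℂ} (h : p ∣ q) (hq : q ≠ 0) :
    wdeg w p ≤ wdeg w q :=
  Polynomial.natDegree_le_of_dvd (map_dvd (weightHom w) h)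
    ((map_ne_zero_iff _ (weightHom_injective w)).2 hq)

lemma weight_add_le_wdeg_of_pderiv {w : Fin 4 → ℕ} {p : MvPolynomial (Fin 4) ℂ} {i : Fin 4}
    {m : Fin 4 →₀ ℕ} (hm : coeff m (pderiv i p) ≠ 0) : Finsupp.weight w m + w i ≤ wdeg w p := by
  rw [coeff_pderiv] at hm
  have := weight_le_wdeg (w := w) (left_ne_zero_of_mul hm)
  rwa [map_add, Finsupp.weight_single, one_smul] at this

lemma wdeg_pderiv_le {w : Fin 4 → ℕ} {p : MvPolynomial (Fin 4) ℂ} {n : ℕ} {i : Fin 4}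
    (hp : wdeg w p ≤ n) : wdeg w (pderiv i p) ≤ n :=
  wdeg_le fun _ hm => by have := weight_add_le_wdeg_of_pderiv (w := w) hm; omega

lemma wdeg_X (w : Fin 4 → ℕ) (i : Fin 4) : wdeg w (X i) = w i := by
  rw [wdeg, weightHom, aeval_X]
  exact Polynomial.natDegree_C_mul_X_pow _ _ (X_ne_zero i)

/-! ### Restriction to the generic line -/

/-- Restriction of a ternary form to the generic line `x₂ = s x₀ + t x₁`. The variables of the target
are `x₀, x₁, s, t`, in this order. -/
noncomputable def toLine : MvPolynomial (Fin 3) ℂ →ₐ[ℂ] MvPolynomial (Fin 4) ℂ :=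
  aeval ![X 0, X 1, X 2 * X 0 + X 3 * X 1]

/-- The weights for which `wdeg` is the degree in `x₀, x₁`. -/
def xWeight : Fin 4 → ℕ := ![1, 1, 0, 0]
/-- The weights for which `wdeg` is the degree in `s, t`. -/
def stWeight : Fin 4 → ℕ := ![0, 0, 1, 1]

lemma weightHom_toLine {p : MvPolynomial (Fin 3) ℂ} {k : ℕ} (hp : p.IsHomogeneous k) :
    weightHom xWeight (toLine p) = Polynomial.C (toLine p) * Polynomial.X ^ k := by
  classical
  conv_lhs => rw [p.as_sum]
  conv_rhs => rw [p.as_sum]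
  simp only [map_sum, Finset.sum_mul]
  refine Finset.sum_congr rfl fun m hm => ?_
  have hdeg : m 0 + m 1 + m 2 = k := by
    have := hp (MvPolynomial.mem_support_iff.1 hm)
    rw [Finsupp.weight_apply, Finsupp.sum_fintype _ _ (by simp)] at this
    simpa [Fin.sum_univ_three] using this
  rw [monomial_eq, Finsupp.prod_fintype _ _ (by simp), Fin.prod_univ_three, ← hdeg]
  simp only [toLine, weightHom, map_mul, map_pow, aeval_X, xWeight]
  simp [algebraMap_eq]
  have h : Polynomial.C (X 2 : MvPolynomial (Fin 4) ℂ) * (Polynomial.C (X 0) * Polynomial.X) +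
      Polynomial.C (X 3) * (Polynomial.C (X 1) * Polynomial.X) =
      (Polynomial.C (X 2) * Polynomial.C (X 0) + Polynomial.C (X 3) * Polynomial.C (X 1)) *
        Polynomial.X := by ring
  rw [h, mul_pow (_ + _) Polynomial.X]
  ring

/-- The derivation `x₁ ∂_s - x₀ ∂_t`. It differentiates along the pencil of lines through the
point `(x₀ : x₁ : s x₀ + t x₁)`, keeping that point fixed, so it kills every form pulled back from
the plane. -/
noncomputable def pencilDer : Derivation ℂ (MvPolynomial (Fin 4) ℂ) (MvPolynomial (Fin 4) ℂ) :=
  (X 1 : MvPolynomial (Fin 4) ℂ) • pderiv 2 - (X 0 : MvPolynomial (Fin 4) ℂ) • pderiv 3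

lemma pencilDer_apply (p : MvPolynomial (Fin 4) ℂ) :
    pencilDer p = X 1 * pderiv 2 p - X 0 * pderiv 3 p := rfl

lemma pderiv_two_toLine (p : MvPolynomial (Fin 3) ℂ) :
    pderiv 2 (toLine p) = X 0 * toLine (pderiv 2 p) := by
  induction p using MvPolynomial.induction_on with
  | C a => simp [toLine, algebraMap_eq]
  | add p q hp hq => simp only [map_add, hp, hq, mul_add]
  | mul_X p i hp =>
    simp only [map_mul, Derivation.leibniz, smul_eq_mul, hp, map_add]
    fin_cases i <;> simp [toLine, pderiv_X] <;> ring

lemma pderiv_three_toLine (p : MvPolynomial (Fin 3) ℂ) :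
    pderiv 3 (toLine p) = X 1 * toLine (pderiv 2 p) := by
  induction p using MvPolynomial.induction_on with
  | C a => simp [toLine, algebraMap_eq]
  | add p q hp hq => simp only [map_add, hp, hq, mul_add]
  | mul_X p i hp =>
    simp only [map_mul, Derivation.leibniz, smul_eq_mul, hp, map_add]
    fin_cases i <;> simp [toLine, pderiv_X] <;> ring

lemma pencilDer_toLine (p : MvPolynomial (Fin 3) ℂ) : pencilDer (toLine p) = 0 := by
  rw [pencilDer_apply, pderiv_two_toLine, pderiv_three_toLine]; ring

lemma wdeg_toLine_le {p : MvPolynomial (Fin 3) ℂ} {k : ℕ} (hp : p.IsHomogeneous k) :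
    wdeg xWeight (toLine p) ≤ k := by
  rw [wdeg, weightHom_toLine hp]
  exact Polynomial.natDegree_C_mul_X_pow_le _ _

lemma wdeg_x_pencilDer_le {p : MvPolynomial (Fin 4) ℂ} {n : ℕ} (hp : wdeg xWeight p ≤ n) :
    wdeg xWeight (pencilDer p) ≤ n + 1 := by
  rw [pencilDer_apply, add_comm n 1]
  exact wdeg_sub_le (wdeg_mul_le (wdeg_X _ _).le (wdeg_pderiv_le hp))
    (wdeg_mul_le (wdeg_X _ _).le (wdeg_pderiv_le hp))

/-- The derivation lowers the degree in `s, t`, so it can only map `p` to a multiple of `p` by killing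
it. -/
lemma pencilDer_eq_zero_of_dvd {p : MvPolynomial (Fin 4) ℂ} (h : p ∣ pencilDer p) :
    pencilDer p = 0 := by
  by_contra hne
  have h1 := wdeg_le_of_dvd (w := stWeight) h hne
  have hp : ∀ m, coeff m (pencilDer p) ≠ 0 → Finsupp.weight stWeight m + 1 ≤ wdeg stWeight p := by
    intro m hm
    rw [pencilDer_apply, coeff_sub] at hm
    have aux : ∀ i j : Fin 4, stWeight i = 1 → stWeight j = 0 → coeff m (X j * pderiv i p) ≠ 0 →
        Finsupp.weight stWeight m + 1 ≤ wdeg stWeight p := by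
      intro i j hi hj hm
      rw [coeff_X_mul'] at hm
      split_ifs at hm with hjm
      · have h2 := weight_add_le_wdeg_of_pderiv (w := stWeight) hm
        have h3 : Finsupp.single j 1 ≤ m := by
          rw [Finsupp.single_le_iff]
          exact Nat.one_le_iff_ne_zero.2 (Finsupp.mem_support_iff.1 hjm)
        have h4 := congrArg (Finsupp.weight stWeight) (tsub_add_cancel_of_le h3)
        rw [map_add, Finsupp.weight_single, hj] at h4
        simp at h4
        omega
      · exact absurd rfl hm
    by_cases h2 : coeff m (X 1 * pderiv 2 p) = 0
    · exact aux 3 0 rfl rfl (fun h3 => hm (by rw [h2, h3, sub_zero]))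
    · exact aux 2 1 rfl rfl h2
  obtain ⟨m, hm⟩ := MvPolynomial.ne_zero_iff.1 hne
  have h3 : wdeg stWeight (pencilDer p) ≤ wdeg stWeight p - 1 :=
    wdeg_le fun m hm => by have := hp m hm; omega
  have := hp m hm
  omega

/-! ### Constants of the derivation along the pencil -/

/-- In an element killed by `x₁ ∂_s - x₀ ∂_t`, every monomial is at least as divisible by `x₁` as by `t`. -/
lemma le_of_coeff_ne_zero_of_pencilDer {p : MvPolynomial (Fin 4) ℂ} (hp : pencilDer p = 0) (n : ℕ) :
    ∀ m : Fin 4 →₀ ℕ, m 3 = n → coeff m p ≠ 0 → n ≤ m 1 := by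
  induction n with
  | zero => intro m _ _; exact Nat.zero_le _
  | succ n ih =>
    intro m hm hc
    obtain ⟨u, rfl⟩ : ∃ u, m = u + Finsupp.single 3 1 :=
      ⟨m - Finsupp.single 3 1, (tsub_add_cancel_of_le (by
        rw [Finsupp.single_le_iff]; omega)).symm⟩
    have h0 := congrArg (coeff (Finsupp.single 0 1 + u)) hp
    rw [pencilDer_apply, coeff_sub, coeff_zero, coeff_X_mul, coeff_pderiv, coeff_X_mul'] at h0
    have hne : coeff (u + Finsupp.single 3 1) p * ((u 3 : ℂ) + 1) ≠ 0 :=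
      mul_ne_zero hc (Nat.cast_add_one_ne_zero _)
    split_ifs at h0 with h1
    · rw [Finsupp.mem_support_iff] at h1
      rw [coeff_pderiv] at h0
      rw [← sub_eq_zero.1 h0] at hne
      have h2 := ih _ (by simpa using hm) (left_ne_zero_of_mul hne)
      simp at h1 h2 ⊢
      omega
    · rw [zero_sub, neg_eq_zero] at h0
      exact absurd h0 hne

/-- A nonzero element killed by `x₁ ∂_s - x₀ ∂_t` has a monomial free of `s`. -/
lemma exists_coeff_ne_zero_of_pencilDer {p : MvPolynomial (Fin 4) ℂ} (hp : pencilDer p = 0)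
    (n : ℕ) : ∀ m : Fin 4 →₀ ℕ, m 2 = n → coeff m p ≠ 0 → ∃ m' : Fin 4 →₀ ℕ,
      m' 2 = 0 ∧ coeff m' p ≠ 0 := by
  induction n with
  | zero => exact fun m h h' => ⟨m, h, h'⟩
  | succ n ih =>
    intro m hm hc
    obtain ⟨u, rfl⟩ : ∃ u, m = u + Finsupp.single 2 1 :=
      ⟨m - Finsupp.single 2 1, (tsub_add_cancel_of_le (by
        rw [Finsupp.single_le_iff]; omega)).symm⟩
    have h0 := congrArg (coeff (Finsupp.single 1 1 + u)) hp
    rw [pencilDer_apply, coeff_sub, coeff_zero, coeff_X_mul, coeff_pderiv, coeff_X_mul'] at h0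
    have hne : coeff (u + Finsupp.single 2 1) p * ((u 2 : ℂ) + 1) ≠ 0 :=
      mul_ne_zero hc (Nat.cast_add_one_ne_zero _)
    split_ifs at h0 with h1
    · rw [coeff_pderiv] at h0
      rw [sub_eq_zero.1 h0] at hne
      exact ih _ (by simpa using hm) (left_ne_zero_of_mul hne)
    · rw [sub_zero] at h0
      exact absurd h0 hne

/-- The exponent of `x₀ ^ m₀ x₁ ^ (m₁ - m₃) x₂ ^ m₃`, the result of setting `t = x₂ / x₁` in
`x₀ ^ m₀ x₁ ^ m₁ t ^ m₃`. It is meaningful for `m₃ ≤ m₁` only, because of the truncated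
subtraction. -/
noncomputable def descendExp (m : Fin 4 →₀ ℕ) : Fin 3 →₀ ℕ :=
  Finsupp.equivFunOnFinite.symm ![m 0, m 1 - m 3, m 3]

/-- The value at `s = 0`, `t = x₂ / x₁` of an element killed by `pencilDer`, as a polynomial in
`x₀, x₁, x₂`; see `specialize_eq_descend`. -/
noncomputable def descend (p : MvPolynomial (Fin 4) ℂ) : MvPolynomial (Fin 3) ℂ :=
  ∑ m ∈ p.support with m 2 = 0, monomial (descendExp m) (coeff m p)

lemma totalDegree_descend_le {p : MvPolynomial (Fin 4) ℂ} (hp : pencilDer p = 0) :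
    (descend p).totalDegree ≤ wdeg xWeight p := by
  refine totalDegree_finsetSum_le fun m hm => (totalDegree_monomial_le _ _).trans ?_
  have hc := MvPolynomial.mem_support_iff.1 (Finset.mem_filter.1 hm).1
  have h1 := weight_le_wdeg (w := xWeight) hc
  have h2 := le_of_coeff_ne_zero_of_pencilDer hp _ m rfl hc
  rw [Finsupp.weight_apply, Finsupp.sum_fintype _ _ (by simp)] at h1
  rw [Finsupp.sum_fintype _ _ (by simp)]
  generalize wdeg xWeight p = W at h1 ⊢
  simp [Fin.sum_univ_four, xWeight] at h1
  simp [Fin.sum_univ_three, descendExp]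
  omega

lemma descend_ne_zero {p : MvPolynomial (Fin 4) ℂ} (hp : pencilDer p = 0) (h0 : p ≠ 0) :
    descend p ≠ 0 := by
  classical
  obtain ⟨m₀, hm₀⟩ := MvPolynomial.ne_zero_iff.1 h0
  obtain ⟨m, hm2, hm⟩ := exists_coeff_ne_zero_of_pencilDer hp _ m₀ rfl hm₀
  refine MvPolynomial.ne_zero_iff.2 ⟨descendExp m, ?_⟩
  rw [descend, coeff_sum, Finset.sum_eq_single m]
  · simpa using hm
  · intro b hb hbm
    rw [coeff_monomial, if_neg]
    intro heq
    apply hbm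
    rw [Finset.mem_filter, MvPolynomial.mem_support_iff] at hb
    have h1 := le_of_coeff_ne_zero_of_pencilDer hp _ b rfl hb.1
    have h2 := le_of_coeff_ne_zero_of_pencilDer hp _ m rfl hm
    have e0 := DFunLike.congr_fun heq 0
    have e1 := DFunLike.congr_fun heq 1
    have e2 := DFunLike.congr_fun heq 2
    simp [descendExp] at e0 e1 e2
    ext i
    fin_cases i <;> simp <;> omega
  · intro h
    exact absurd (Finset.mem_filter.2 ⟨MvPolynomial.mem_support_iff.2 hm, hm2⟩) h

/-- The substitution `s = 0`, `t = x₂ / x₁`, with values in the field of rational functions on the plane. -/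
noncomputable def specialize :
    MvPolynomial (Fin 4) ℂ →ₐ[ℂ] FractionRing (MvPolynomial (Fin 3) ℂ) :=
  aeval ![algebraMap _ _ (X 0 : MvPolynomial (Fin 3) ℂ),
    algebraMap _ _ (X 1 : MvPolynomial (Fin 3) ℂ), 0,
    algebraMap _ _ (X 2 : MvPolynomial (Fin 3) ℂ) / algebraMap _ _ (X 1 : MvPolynomial (Fin 3) ℂ)]

lemma algebraMap_X_one_ne_zero : algebraMap (MvPolynomial (Fin 3) ℂ)
    (FractionRing (MvPolynomial (Fin 3) ℂ)) (X 1) ≠ 0 :=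
  (map_ne_zero_iff _ (IsFractionRing.injective _ _)).2 (X_ne_zero 1)

/-- The substitution puts `s x₀ + t x₁` equal to `x₂`, so it undoes the restriction to the generic line. -/
lemma specialize_toLine (p : MvPolynomial (Fin 3) ℂ) :
    specialize (toLine p) = algebraMap _ _ p := by
  have : specialize.comp toLine =
      IsScalarTower.toAlgHom ℂ (MvPolynomial (Fin 3) ℂ) (FractionRing (MvPolynomial (Fin 3) ℂ)) := by
    refine MvPolynomial.algHom_ext fun i => ?_
    have := algebraMap_X_one_ne_zero
    fin_cases i <;> simp [specialize, toLine, this]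
  exact DFunLike.congr_fun this p

lemma specialize_eq_descend {p : MvPolynomial (Fin 4) ℂ} (hp : pencilDer p = 0) :
    specialize p = algebraMap _ _ (descend p) := by
  conv_lhs => rw [p.as_sum]
  rw [descend, map_sum, map_sum, Finset.sum_filter]
  refine Finset.sum_congr rfl fun m hm => ?_
  have h1 := le_of_coeff_ne_zero_of_pencilDer hp _ m rfl (MvPolynomial.mem_support_iff.1 hm)
  obtain ⟨k, hk⟩ := Nat.exists_eq_add_of_le h1
  have hx := algebraMap_X_one_ne_zero
  rw [specialize, aeval_monomial, Finsupp.prod_fintype _ _ (by simp), Fin.prod_univ_four]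
  split_ifs with h2
  · rw [monomial_eq, Finsupp.prod_fintype _ _ (by simp), Fin.prod_univ_three]
    simp only [map_mul, map_pow, descendExp]
    simp [hk, h2]
    rw [← algebraMap_eq, ← IsScalarTower.algebraMap_apply]
    rw [pow_add, div_pow]
    field_simp
  · simp [h2]

/-! ### Syzygies on the generic line and its first order neighbourhood -/

/-- A syzygy on the generic line that is killed by `pencilDer` comes from a syzygy of `g` in the plane,
hence vanishes in degree less than `e`. -/
lemma eq_zero_of_pencilDer_eq_zero {e N : ℕ} {g : Fin 3 → MvPolynomial (Fin 3) ℂ}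
    (hg : ∀ i, (g i).IsHomogeneous e) {c : Fin 3 → Fin 3 → MvPolynomial (Fin 3) ℂ}
    (hc : ∀ i, X i ^ N = ∑ l, c i l * g l) {b : Fin 3 → MvPolynomial (Fin 4) ℂ}
    (hb : ∑ l, b l * toLine (g l) = 0) (hD : ∀ i, pencilDer (b i) = 0)
    (hdeg : ∀ i, wdeg xWeight (b i) < e) : b = 0 := by
  have h := syzygy_eq_zero g hg c hc (fun i => descend (b i)) (by
    apply IsFractionRing.injective (MvPolynomial (Fin 3) ℂ)
      (FractionRing (MvPolynomial (Fin 3) ℂ))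
    have := congrArg specialize hb
    simpa only [map_sum, map_mul, specialize_toLine, specialize_eq_descend (hD _), map_zero]
      using this) (fun i => (totalDegree_descend_le (hD i)).trans_lt (hdeg i))
  funext i
  by_contra hne
  exact descend_ne_zero (hD i) hne (congrFun h i)

/-- A syzygy `a` on the generic line that is proportional to its derivative `pencilDer a` vanishes in
degree less than `e`: after division by the greatest common divisor of its entries, each entry
divides its own derivative, so `pencilDer` kills it. -/
lemma eq_zero_of_proportional_pencilDer {e N : ℕ} {g : Fin 3 → MvPolynomial (Fin 3) ℂ}
    (hg : ∀ i, (g i).IsHomogeneous e) {c : Fin 3 → Fin 3 → MvPolynomial (Fin 3) ℂ}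
    (hc : ∀ i, X i ^ N = ∑ l, c i l * g l) {a : Fin 3 → MvPolynomial (Fin 4) ℂ}
    (ha : ∑ l, a l * toLine (g l) = 0)
    (hD : ∀ i j, a i * pencilDer (a j) = a j * pencilDer (a i))
    (hdeg : ∀ i, wdeg xWeight (a i) < e) : a = 0 := by
  classical
  let _ : StrongNormalizationMonoid (MvPolynomial (Fin 4) ℂ) :=
    UniqueFactorizationMonoid.strongNormalizationMonoid
  let _ : NormalizedGCDMonoid (MvPolynomial (Fin 4) ℂ) :=
    UniqueFactorizationMonoid.toNormalizedGCDMonoid _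
  by_contra hne
  obtain ⟨b, hb, hgcd⟩ := Finset.extract_gcd a (s := Finset.univ) ⟨0, Finset.mem_univ _⟩
  set γ := Finset.univ.gcd a with hγdef
  replace hb : ∀ i, a i = γ * b i := fun i => hb i (Finset.mem_univ i)
  have hγ : γ ≠ 0 := by
    intro h
    exact hne (funext fun i => by simp [hb i, h])
  have hDb : ∀ i, pencilDer (b i) = 0 := by
    intro i
    apply pencilDer_eq_zero_of_dvd
    have h1 : ∀ j, b i ∣ b j * pencilDer (b i) := by
      intro j
      refine ⟨pencilDer (b j), ?_⟩
      have := hD i j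
      simp only [hb, Derivation.leibniz, smul_eq_mul] at this
      refine mul_left_cancel₀ (pow_ne_zero 2 hγ) ?_
      linear_combination -this
    have h2 : b i ∣ Finset.univ.gcd fun j => b j * pencilDer (b i) :=
      Finset.dvd_gcd fun j _ => h1 j
    have h3 := (Finset.gcd_mul_right' Finset.univ b (pencilDer (b i))).dvd
    rw [hgcd, one_mul] at h3
    exact h2.trans h3
  have hb0 : b = 0 := by
    refine eq_zero_of_pencilDer_eq_zero hg hc (mul_left_cancel₀ hγ ?_) hDb fun i => ?_
    · rw [Finset.mul_sum, mul_zero, ← ha]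
      exact Finset.sum_congr rfl fun i _ => by rw [hb i, mul_assoc]
    · by_cases h : a i = 0
      · have : b i = 0 := by simpa [hγ, h] using (hb i).symm
        rw [this, ← h]; exact hdeg i
      · exact (wdeg_le_of_dvd ⟨γ, by rw [hb i, mul_comm]⟩ h).trans_lt (hdeg i)
  exact hne (funext fun i => by simp [hb i, hb0])

/-- On the generic line, two syzygies of `g` whose degrees add up to less than `e` are proportional:
their cross product is a multiple of `g`, which has degree `e` in `x₀, x₁`. -/
lemma proportional_of_syzygies {e N k l : ℕ} {g : Fin 3 → MvPolynomial (Fin 3) ℂ}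
    (hg : ∀ i, (g i).IsHomogeneous e) {c : Fin 3 → Fin 3 → MvPolynomial (Fin 3) ℂ}
    (hc : ∀ i, X i ^ N = ∑ l, c i l * g l) {a b : Fin 3 → MvPolynomial (Fin 4) ℂ}
    (ha : ∑ l, a l * toLine (g l) = 0) (hb : ∑ l, b l * toLine (g l) = 0)
    (hak : ∀ i, wdeg xWeight (a i) ≤ k) (hbl : ∀ i, wdeg xWeight (b i) ≤ l) (hkl : k + l < e) :
    ∀ i j, a i * b j = a j * b i := by
  have hcX : ∀ i, toLine (X i ^ N) = ∑ l, toLine (c i l) * toLine (g l) := fun i => by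
    rw [hc i, map_sum]
    simp only [map_mul]
  have hX0 : toLine (X 0 ^ N) = X 0 ^ N := by simp [toLine]
  have hX1 : toLine (X 1 ^ N) = X 1 ^ N := by simp [toLine]
  simp only [Fin.sum_univ_three] at ha hb
  obtain ⟨r, hr⟩ := exists_mul_of_proportional (pow_ne_zero N (X_ne_zero (R := ℂ) (0 : Fin 4)))
    (X_pow_dvd_of_dvd_mul (by decide : (0 : Fin 4) ≠ 1) N) (fun i => toLine (g i))
    (crossProduct a b) (fun i => toLine (c 0 i)) (fun i => toLine (c 1 i))
    (by rw [← hX0, hcX]) (by rw [← hX1, hcX]) (by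
      intro i j
      rw [cross_apply]
      fin_cases i <;> fin_cases j <;> simp
      · linear_combination -a 2 * hb + b 2 * ha
      · linear_combination a 1 * hb - b 1 * ha
      · linear_combination a 2 * hb - b 2 * ha
      · linear_combination -a 0 * hb + b 0 * ha
      · linear_combination -a 1 * hb + b 1 * ha
      · linear_combination a 0 * hb - b 0 * ha)
  have hz : ∀ i, crossProduct a b i = 0 := by
    intro i
    by_contra hne
    have h1 : wdeg xWeight (crossProduct a b i) ≤ k + l := by
      have hm : ∀ i j, wdeg xWeight (a i * b j) ≤ k + l := fun i j =>
        wdeg_mul_le (hak i) (hbl j)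
      rw [cross_apply]
      fin_cases i <;> exact wdeg_sub_le (hm _ _) (hm _ _)
    have h2 := congrArg (weightHom xWeight) (hr i)
    rw [map_mul, weightHom_toLine (hg i)] at h2
    have h3 := Polynomial.natDegree_le_of_dvd (p := Polynomial.X ^ e)
      (q := weightHom xWeight (crossProduct a b i))
      ⟨weightHom xWeight r * Polynomial.C (toLine (g i)), by rw [h2]; ring⟩
      ((map_ne_zero_iff _ (weightHom_injective xWeight)).2 hne)
    rw [Polynomial.natDegree_X_pow] at h3
    have h4 : (weightHom xWeight (crossProduct a b i)).natDegree ≤ k + l := h1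
    omega
  have z0 := hz 0
  have z1 := hz 1
  have z2 := hz 2
  rw [cross_apply] at z0 z1 z2
  simp at z0 z1 z2
  intro i j
  fin_cases i <;> fin_cases j <;> dsimp <;> try rfl
  · linear_combination z2
  · linear_combination -z1
  · linear_combination -z2
  · linear_combination z0
  · linear_combination z1
  · linear_combination -z0

/-- A syzygy `a + b ε` of `g` on the first order neighbourhood `ε ^ 2 = 0` of the generic line, where
`ε = x₂ - s x₀ - t x₁`, vanishes if its degree is less than `e / 2`. Both `∂_s a - x₀ b` and
`∂_t a - x₁ b` are syzygies on the line, hence proportional to `a`; so is the combination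
`x₁ ∂_s a - x₀ ∂_t a`, which does not involve `b`. -/
lemma first_order_vanishing {e N k : ℕ} {g : Fin 3 → MvPolynomial (Fin 3) ℂ}
    (hg : ∀ i, (g i).IsHomogeneous e) {c : Fin 3 → Fin 3 → MvPolynomial (Fin 3) ℂ}
    (hc : ∀ i, X i ^ N = ∑ l, c i l * g l) {a b : Fin 3 → MvPolynomial (Fin 4) ℂ}
    (ha : ∑ l, a l * toLine (g l) = 0)
    (hb : ∑ l, (b l * toLine (g l) + a l * toLine (pderiv 2 (g l))) = 0)
    (hak : ∀ i, wdeg xWeight (a i) ≤ k + 1) (hbk : ∀ i, wdeg xWeight (b i) ≤ k)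
    (hke : 2 * k + 2 < e) : a = 0 ∧ b = 0 := by
  have ha0 : a = 0 := by
    -- Used for `∂_s` with `y = x₀` and for `∂_t` with `y = x₁`.
    have aux : ∀ n : Fin 4, ∀ y : MvPolynomial (Fin 4) ℂ, wdeg xWeight y ≤ 1 →
        (∀ p, pderiv n (toLine p) = y * toLine (pderiv 2 p)) →
        ∀ i j, a i * (pderiv n (a j) - y * b j) = a j * (pderiv n (a i) - y * b i) := by
      intro n y hy hn
      refine proportional_of_syzygies hg hc (b := fun i => pderiv n (a i) - y * b i) (k := k + 1)
        (l := k + 1) ha ?_ hak ?_ (by omega)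
      · have h1 := congrArg (pderiv n) ha
        rw [map_sum, map_zero] at h1
        simp only [Derivation.leibniz, smul_eq_mul, hn] at h1
        calc _ = (∑ l, (a l * (y * toLine (pderiv 2 (g l))) + toLine (g l) * pderiv n (a l)))
              - y * ∑ l, (b l * toLine (g l) + a l * toLine (pderiv 2 (g l))) := by
              rw [Finset.mul_sum, ← Finset.sum_sub_distrib]
              exact Finset.sum_congr rfl fun i _ => by ring
          _ = 0 := by rw [h1, hb]; ring
      · intro i
        rw [add_comm k 1]
        exact wdeg_sub_le (by rw [add_comm]; exact wdeg_pderiv_le (hak i))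
          (wdeg_mul_le hy (hbk i))
    have h2 := aux 2 (X 0) (wdeg_X _ _).le pderiv_two_toLine
    have h3 := aux 3 (X 1) (wdeg_X _ _).le pderiv_three_toLine
    refine eq_zero_of_proportional_pencilDer hg hc ha (fun i j => ?_)
      (fun i => (hak i).trans_lt (by omega))
    rw [pencilDer_apply, pencilDer_apply]
    linear_combination X 1 * h2 i j - X 0 * h3 i j
  refine ⟨ha0, ?_⟩
  subst ha0
  simp only [Pi.zero_apply, zero_mul, add_zero] at hb
  refine eq_zero_of_proportional_pencilDer hg hc hb ?_ (fun i => (hbk i).trans_lt (by omega))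
  refine proportional_of_syzygies hg hc (b := fun i => pencilDer (b i)) hb ?_ hbk
    (fun i => wdeg_x_pencilDer_le (hbk i)) (by omega)
  have h1 := congrArg pencilDer hb
  rw [map_sum, map_zero] at h1
  simp only [Derivation.leibniz, smul_eq_mul, pencilDer_toLine, mul_zero, zero_add] at h1
  rw [← h1]
  exact Finset.sum_congr rfl fun i _ => mul_comm _ _

/-! ### The Nullstellensatz -/

/-- Smoothness in algebraic form, by the Nullstellensatz: the Jacobian ideal contains a power of every
variable. -/
lemma exists_X_pow_eq {f : MvPolynomial (Fin 3) ℂ}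
    (hsm : ∀ x : Fin 3 → ℂ, x ≠ 0 → ∃ i : Fin 3, eval x (pderiv i f) ≠ 0) :
    ∃ (N : ℕ) (c : Fin 3 → Fin 3 → MvPolynomial (Fin 3) ℂ),
      ∀ i, X i ^ N = ∑ l, c i l * pderiv l f := by
  have h : ∀ i : Fin 3, ∃ n : ℕ, (X i : MvPolynomial (Fin 3) ℂ) ^ n ∈
      Ideal.span (Set.range fun l => pderiv l f) := by
    intro i
    change X i ∈ (Ideal.span (Set.range fun l => pderiv l f)).radical
    rw [← vanishingIdeal_zeroLocus_eq_radical (K := ℂ), mem_vanishingIdeal_iff]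
    intro x hx
    rw [zeroLocus_span] at hx
    by_cases h0 : x = 0
    · simp [h0]
    · obtain ⟨l, hl⟩ := hsm x h0
      exact absurd (hx _ ⟨l, rfl⟩) (by simpa [coe_aeval_eq_eval] using hl)
  choose n hn using h
  have h2 : ∀ i : Fin 3, ∃ c : Fin 3 → MvPolynomial (Fin 3) ℂ,
      ∑ l, c l * pderiv l f = X i ^ (∑ j, n j) := fun i =>
    Ideal.mem_span_range_iff_exists_fun.1
      (Ideal.pow_mem_of_pow_mem _ (hn i) (Finset.single_le_sum (f := n)
        (fun _ _ => Nat.zero_le _) (Finset.mem_univ i)))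
  choose c hc using h2
  exact ⟨_, c, fun i => (hc i).symm⟩

/-! ### Division by the square of the generic linear form -/

/-- The inclusion of `ℂ[x₀, x₁, x₂]` in `ℂ[x₀, x₁, s, t][x₂]`, the last variable being the polynomial
variable. -/
noncomputable def toPencil : MvPolynomial (Fin 3) ℂ →ₐ[ℂ] Polynomial (MvPolynomial (Fin 4) ℂ) :=
  aeval ![Polynomial.C (X 0), Polynomial.C (X 1), Polynomial.X]

lemma eval_toPencil (p : MvPolynomial (Fin 3) ℂ) :
    (toPencil p).eval (X 2 * X 0 + X 3 * X 1) = toLine p := by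
  induction p using MvPolynomial.induction_on with
  | C a => simp [toLine, toPencil, Polynomial.algebraMap_apply]
  | add p q hp hq => simp only [map_add, Polynomial.eval_add, hp, hq]
  | mul_X p i hp =>
    simp only [map_mul, Polynomial.eval_mul, hp]
    fin_cases i <;> simp [toLine, toPencil]

lemma derivative_toPencil (p : MvPolynomial (Fin 3) ℂ) :
    (toPencil p).derivative = toPencil (pderiv 2 p) := by
  induction p using MvPolynomial.induction_on with
  | C a => simp [toPencil, Polynomial.algebraMap_apply]
  | add p q hp hq => simp only [map_add, hp, hq]
  | mul_X p i hp =>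
    simp only [map_mul, Polynomial.derivative_mul, hp, Derivation.leibniz, smul_eq_mul, map_add]
    fin_cases i <;> simp [toPencil, pderiv_X] <;> ring

/-- With `ℓ = x₂ - s x₀ - t x₁` the generic linear form: a relation `ℓ ^ 2 h = ∑ aᵢ gᵢ` with
coefficients of low degree forces `ℓ ^ 2` to divide every `aᵢ`, so that `h` lies in the ideal of
the `gᵢ`. -/
lemma mem_of_sq_mul_mem {e N k : ℕ} {g : Fin 3 → MvPolynomial (Fin 3) ℂ}
    (hg : ∀ i, (g i).IsHomogeneous e) {c : Fin 3 → Fin 3 → MvPolynomial (Fin 3) ℂ}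
    (hc : ∀ i, X i ^ N = ∑ l, c i l * g l)
    {h : Polynomial (MvPolynomial (Fin 4) ℂ)} {a : Fin 3 → Polynomial (MvPolynomial (Fin 4) ℂ)}
    (ha : (Polynomial.X - Polynomial.C (X 2 * X 0 + X 3 * X 1)) ^ 2 * h =
      ∑ l, a l * toPencil (g l))
    (ha0 : ∀ i, wdeg xWeight ((a i).eval (X 2 * X 0 + X 3 * X 1)) ≤ k + 1)
    (ha1 : ∀ i, wdeg xWeight ((a i).derivative.eval (X 2 * X 0 + X 3 * X 1)) ≤ k)
    (hke : 2 * k + 2 < e) : ∃ b : Fin 3 → Polynomial (MvPolynomial (Fin 4) ℂ),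
      h = ∑ l, b l * toPencil (g l) := by
  set z : MvPolynomial (Fin 4) ℂ := X 2 * X 0 + X 3 * X 1 with hz
  have e0 := congrArg (Polynomial.eval z) ha
  have e1 := congrArg (fun p => (Polynomial.derivative p).eval z) ha
  simp only [Polynomial.eval_mul, Polynomial.eval_finsetSum, eval_toPencil, hz,
    Polynomial.derivative_mul, Polynomial.derivative_sum, derivative_toPencil,
    Polynomial.eval_add] at e0 e1
  rw [← hz] at e0 e1
  obtain ⟨h0, h1⟩ := first_order_vanishing hg hc
    (a := fun i => (a i).eval z) (b := fun i => (a i).derivative.eval z)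
    (by rw [← e0]; simp)
    (by rw [← e1]; simp [pow_two])
    ha0 ha1 hke
  have hdvd : ∀ i, ∃ b, a i = (Polynomial.X - Polynomial.C z) ^ 2 * b := by
    intro i
    obtain ⟨q, hq⟩ := Polynomial.dvd_iff_isRoot.2 (congrFun h0 i : (a i).IsRoot z)
    have h2 := congrFun h1 i
    simp only [hq, Polynomial.derivative_mul, Polynomial.eval_add, Polynomial.eval_mul] at h2
    obtain ⟨b, hb⟩ := Polynomial.dvd_iff_isRoot.2 (show q.IsRoot z by simpa using h2)
    exact ⟨b, by rw [hq, hb]; ring⟩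
  choose b hb using hdvd
  refine ⟨b, mul_left_cancel₀ (pow_ne_zero 2 (Polynomial.X_sub_C_ne_zero z)) ?_⟩
  rw [ha, Finset.mul_sum]
  exact Finset.sum_congr rfl fun i _ => by rw [hb i, mul_assoc]

/-! ### Dimensions of the graded pieces -/

lemma finrank_homogeneousSubmodule (n : ℕ) :
    finrank ℂ (homogeneousSubmodule (Fin 3) ℂ n) = (n + 2).choose 2 := by
  classical
  have h : {d : Fin 3 →₀ ℕ | d.degree = n} =
      ↑(Finset.finsuppAntidiag Finset.univ n : Finset (Fin 3 →₀ ℕ)) := by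
    ext d
    simp [Finset.mem_finsuppAntidiag, Finsupp.degree_eq_sum]
  rw [homogeneousSubmodule_eq_finsupp_supported, h]
  change finrank ℂ (restrictSupport ℂ _) = _
  rw [finrank_eq_card_basis (basisRestrictSupport ℂ
      (↑(Finset.finsuppAntidiag Finset.univ n : Finset (Fin 3 →₀ ℕ)) : Set (Fin 3 →₀ ℕ))),
    ← Set.toFinset_card, Finset.toFinset_coe, Finset.card_finsuppAntidiag_nat_eq_choose]
  simp only [Finset.card_univ, Fintype.card_fin]
  rw [show 3 + n - 1 = n + 2 by omega, Nat.choose_symm_add]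

lemma homogeneousComponent_mul_of_isHomogeneous {e : ℕ} {g : MvPolynomial (Fin 3) ℂ}
    (hg : g.IsHomogeneous e) (n : ℕ) (r : MvPolynomial (Fin 3) ℂ) :
    homogeneousComponent (n + e) (r * g) = homogeneousComponent n r * g := by
  conv_lhs => rw [← sum_homogeneousComponent r]
  rw [Finset.sum_mul, map_sum]
  have : ∀ i, homogeneousComponent (n + e) (homogeneousComponent i r * g) =
      if n = i then homogeneousComponent n r * g else 0 := by
    intro i
    rw [homogeneousComponent_of_mem ((mem_homogeneousSubmodule _ _).2
      ((homogeneousComponent_isHomogeneous i r).mul hg))]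
    by_cases hi : n = i
    · simp [hi]
    · simp [hi]
  simp only [this]
  rw [Finset.sum_ite_eq]
  split_ifs with h
  · rfl
  · rw [homogeneousComponent_eq_zero, zero_mul]
    simpa using h

lemma exists_homogeneous_of_mem_span {e n : ℕ} {g : Fin 3 → MvPolynomial (Fin 3) ℂ}
    (hg : ∀ i, (g i).IsHomogeneous e) {p : MvPolynomial (Fin 3) ℂ} (hp : p.IsHomogeneous (n + e))
    (hpJ : p ∈ Ideal.span (Set.range g)) :
    ∃ r : Fin 3 → MvPolynomial (Fin 3) ℂ, (∀ i, (r i).IsHomogeneous n) ∧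
      p = ∑ l, r l * g l := by
  obtain ⟨s, hs⟩ := Ideal.mem_span_range_iff_exists_fun.1 hpJ
  refine ⟨fun i => homogeneousComponent n (s i), fun i => homogeneousComponent_isHomogeneous _ _, ?_⟩
  have h1 := homogeneousComponent_of_mem (m := n + e) ((mem_homogeneousSubmodule _ _).2 hp)
  rw [if_pos rfl] at h1
  rw [← h1, ← hs, map_sum]
  exact Finset.sum_congr rfl fun i _ => homogeneousComponent_mul_of_isHomogeneous (hg i) _ _

lemma eq_zero_of_mem_span_of_lt {e n : ℕ} {g : Fin 3 → MvPolynomial (Fin 3) ℂ}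
    (hg : ∀ i, (g i).IsHomogeneous e) {p : MvPolynomial (Fin 3) ℂ} (hp : p.IsHomogeneous n)
    (hn : n < e) (hpJ : p ∈ Ideal.span (Set.range g)) : p = 0 := by
  obtain ⟨s, rfl⟩ := Ideal.mem_span_range_iff_exists_fun.1 hpJ
  ext m
  rw [coeff_zero]
  by_contra hne
  have hm : m.degree = n := by
    by_contra h
    exact hne (hp.coeff_eq_zero h)
  refine hne ?_
  rw [coeff_sum]
  exact Finset.sum_eq_zero fun i _ => by
    rw [mul_comm]
    exact coeff_mul_eq_zero_of_degree_lt (hg i) _ _ (hm ▸ hn)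

/-- In degree `n + e` with `n < e` the ideal of `g` is a sum of three independent copies of the forms of
degree `n`. -/
lemma finrank_gradedPiece_add {e N n : ℕ} {g : Fin 3 → MvPolynomial (Fin 3) ℂ}
    (hg : ∀ i, (g i).IsHomogeneous e) {c : Fin 3 → Fin 3 → MvPolynomial (Fin 3) ℂ}
    (hc : ∀ i, X i ^ N = ∑ l, c i l * g l) (hn : n < e) :
    finrank ℂ (gradedPiece (Ideal.span (Set.range g)) (n + e)) + 3 * (n + 2).choose 2 =
      (n + e + 2).choose 2 := by
  set J := Ideal.span (Set.range g) with hJ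
  let π : homogeneousSubmodule (Fin 3) ℂ (n + e) →ₗ[ℂ] MvPolynomial (Fin 3) ℂ ⧸ J :=
    (Ideal.Quotient.mkₐ ℂ J).toLinearMap.comp (Submodule.subtype _)
  have hfin : ∀ k, Module.Finite ℂ (homogeneousSubmodule (Fin 3) ℂ k) := fun k =>
    Module.Finite.iff_fg.2 (homogeneousSubmodule_fg _ _ _)
  have hπ : LinearMap.range π = gradedPiece J (n + e) := by
    rw [LinearMap.range_comp, Submodule.range_subtype]; rfl
  let Φ : (Fin 3 → homogeneousSubmodule (Fin 3) ℂ n) →ₗ[ℂ] MvPolynomial (Fin 3) ℂ :=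
    ∑ l, (LinearMap.mulRight ℂ (g l)).comp ((Submodule.subtype _).comp (LinearMap.proj l))
  have hΦ : ∀ r, Φ r = ∑ l, (r l : MvPolynomial (Fin 3) ℂ) * g l := fun r => by
    simp [Φ, LinearMap.sum_apply]
  have hinj : Function.Injective Φ := by
    rw [← LinearMap.ker_eq_bot, LinearMap.ker_eq_bot']
    intro r hr
    rw [hΦ] at hr
    have := syzygy_eq_zero g hg c hc _ hr fun i =>
      (IsHomogeneous.totalDegree_le (r i).2).trans_lt hn
    funext i
    exact Subtype.ext (congrFun this i)
  have hker : (LinearMap.ker π).map (Submodule.subtype _) = LinearMap.range Φ := by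
    ext p
    simp only [Submodule.mem_map, LinearMap.mem_ker, LinearMap.mem_range]
    constructor
    · rintro ⟨q, hq, rfl⟩
      obtain ⟨r, hr, hqr⟩ := exists_homogeneous_of_mem_span hg q.2 (Ideal.Quotient.eq_zero_iff_mem.1 hq)
      exact ⟨fun i => ⟨r i, hr i⟩, by rw [hΦ]; exact hqr.symm⟩
    · rintro ⟨r, rfl⟩
      rw [hΦ]
      refine ⟨⟨_, Submodule.sum_mem _ (t := Finset.univ) fun i _ =>
        (show _ ∈ homogeneousSubmodule _ _ _ from IsHomogeneous.mul (r i).2 (hg i))⟩, ?_, rfl⟩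
      exact Ideal.Quotient.eq_zero_iff_mem.2
        (Ideal.mem_span_range_iff_exists_fun.2 ⟨fun l => (r l : MvPolynomial (Fin 3) ℂ), rfl⟩)
  have h1 := LinearMap.finrank_range_add_finrank_ker π
  rw [hπ, finrank_homogeneousSubmodule, ← Submodule.finrank_map_subtype_eq, hker,
    LinearMap.finrank_range_of_inj hinj, Module.finrank_pi_fintype] at h1
  simpa [finrank_homogeneousSubmodule] using h1

lemma finrank_gradedPiece_of_lt {e n : ℕ} {g : Fin 3 → MvPolynomial (Fin 3) ℂ}
    (hg : ∀ i, (g i).IsHomogeneous e) (hn : n < e) :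
    finrank ℂ (gradedPiece (Ideal.span (Set.range g)) n) = (n + 2).choose 2 := by
  rw [← finrank_homogeneousSubmodule]
  set J := Ideal.span (Set.range g) with hJ
  let π : homogeneousSubmodule (Fin 3) ℂ n →ₗ[ℂ] MvPolynomial (Fin 3) ℂ ⧸ J :=
    (Ideal.Quotient.mkₐ ℂ J).toLinearMap.comp (Submodule.subtype _)
  have hπ : LinearMap.range π = gradedPiece J n := by
    rw [LinearMap.range_comp, Submodule.range_subtype]; rfl
  rw [← hπ]
  refine LinearMap.finrank_range_of_inj ?_
  rw [← LinearMap.ker_eq_bot, LinearMap.ker_eq_bot']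
  intro q hq
  exact Subtype.ext (eq_zero_of_mem_span_of_lt hg q.2 hn (Ideal.Quotient.eq_zero_iff_mem.1 hq))

/-- The pieces of degrees `3d' - 4` and `3d' - 2` have the same dimension. For `d' = 2` the first one
lies in degree `2`, below the degree `3` of the generators of the ideal. -/
lemma finrank_gradedPiece_eq {d' N : ℕ} (hd' : 2 ≤ d') {g : Fin 3 → MvPolynomial (Fin 3) ℂ}
    (hg : ∀ i, (g i).IsHomogeneous (2 * d' - 1)) {c : Fin 3 → Fin 3 → MvPolynomial (Fin 3) ℂ}
    (hc : ∀ i, X i ^ N = ∑ l, c i l * g l) :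
    finrank ℂ (gradedPiece (Ideal.span (Set.range g)) (3 * d' - 4)) =
      finrank ℂ (gradedPiece (Ideal.span (Set.range g)) (3 * d' - 4 + 2)) := by
  obtain ⟨n, rfl⟩ := Nat.exists_eq_add_of_le' hd'
  have h2 := finrank_gradedPiece_add (n := n + 1) hg hc (by omega)
  rw [show 3 * (n + 2) - 4 + 2 = n + 1 + (2 * (n + 2) - 1) by omega]
  rcases n with _ | n
  · rw [finrank_gradedPiece_of_lt hg (by omega)]
    norm_num [Nat.choose] at h2 ⊢
    omega
  · have h1 := finrank_gradedPiece_add (n := n) hg hc (by omega)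
    rw [show 3 * (n + 1 + 2) - 4 = n + (2 * (n + 1 + 2) - 1) by omega]
    rw [show n + (2 * (n + 1 + 2) - 1) + 2 = (3 * n + 6) + 1 by omega] at h1
    rw [show n + 1 + 1 + (2 * (n + 1 + 2) - 1) + 2 = (3 * n + 6) + 1 + 1 + 1 by omega] at h2
    simp only [Nat.choose_succ_succ' _ 1, Nat.choose_one_right] at h1 h2
    omega

/-! ### The determinant of multiplication by the square of a linear form -/

/-- The inclusion of the parameter ring `ℂ[s, t]` in `ℂ[x₀, x₁, s, t]`. -/
noncomputable def paramHom : MvPolynomial (Fin 2) ℂ →ₐ[ℂ] MvPolynomial (Fin 4) ℂ :=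
  aeval ![X 2, X 3]

lemma wdeg_paramHom (q : MvPolynomial (Fin 2) ℂ) : wdeg xWeight (paramHom q) ≤ 0 := by
  induction q using MvPolynomial.induction_on with
  | C a => simp [paramHom, wdeg]
  | add p q hp hq => rw [map_add]; exact wdeg_add_le hp hq
  | mul_X p i hp =>
    rw [map_mul]
    refine wdeg_mul_le (k := 0) hp ?_
    fin_cases i <;> simp [paramHom, wdeg_X, xWeight]

/-- The coefficients of the generic linear form `x₂ - s x₀ - t x₁`, as elements of `ℂ[s, t]`. -/
noncomputable def lineCoeff : Fin 3 → MvPolynomial (Fin 2) ℂ := ![-X 0, -X 1, 1]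

lemma sum_lineCoeff : ∑ a, Polynomial.C (paramHom (lineCoeff a)) * toPencil (X a) =
    Polynomial.X - Polynomial.C (X 2 * X 0 + X 3 * X 1) := by
  simp [Fin.sum_univ_three, lineCoeff, paramHom, toPencil]
  ring

/-- Specialization of the parameters `(s, t)` to a point `y`, a map `ℂ[x₀, x₁, s, t][x₂] → ℂ[x₀, x₁, x₂]`. -/
noncomputable def fiberHom (y : Fin 2 → ℂ) :
    Polynomial (MvPolynomial (Fin 4) ℂ) →+* MvPolynomial (Fin 3) ℂ :=
  Polynomial.eval₂RingHom
    (aeval ![X 0, X 1, C (y 0), C (y 1)] :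
      MvPolynomial (Fin 4) ℂ →ₐ[ℂ] MvPolynomial (Fin 3) ℂ).toRingHom (X 2)

lemma fiberHom_toPencil (y : Fin 2 → ℂ) (p : MvPolynomial (Fin 3) ℂ) :
    fiberHom y (toPencil p) = p := by
  induction p using MvPolynomial.induction_on with
  | C a => simp [fiberHom, toPencil, Polynomial.algebraMap_apply, algebraMap_eq]
  | add p q hp hq => simp only [map_add, hp, hq]
  | mul_X p i hp =>
    rw [map_mul, map_mul, hp]
    congr 1
    fin_cases i <;> simp [fiberHom, toPencil]

lemma fiberHom_paramHom (y : Fin 2 → ℂ) (q : MvPolynomial (Fin 2) ℂ) :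
    fiberHom y (Polynomial.C (paramHom q)) = C (eval y q) := by
  induction q using MvPolynomial.induction_on with
  | C a => simp [fiberHom, paramHom, algebraMap_eq]
  | add p q hp hq => simp only [map_add, hp, hq]
  | mul_X p i hp =>
    rw [map_mul, map_mul, map_mul, hp, map_mul, map_mul]
    congr 1
    fin_cases i <;> simp [fiberHom, paramHom]

lemma sum_rotate {ι κ A : Type*} [Fintype ι] [Fintype κ] [AddCommMonoid A]
    (F : Fin 3 → Fin 3 → ι → κ → A) :
    ∑ j, ∑ a, ∑ b, ∑ i, F a b j i = ∑ i, ∑ j, ∑ a, ∑ b, F a b j i := by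
  rw [Finset.sum_comm (s := (Finset.univ : Finset κ))]
  refine Finset.sum_congr rfl fun j _ => ?_
  rw [Finset.sum_comm (s := (Finset.univ : Finset κ))]
  exact Finset.sum_congr rfl fun a _ => Finset.sum_comm

/-- The determinant `P` of multiplication by `ℓ ^ 2`, in fixed bases, is a polynomial in the
coefficients of `ℓ`, and multiplication is bijective wherever `P` does not vanish. If `P` were zero,
the matrix for the generic form `x₂ - s x₀ - t x₁` would have a nonzero kernel vector over
`ℂ[s, t]`; by `mem_of_sq_mul_mem` its value at every `(s, t)` represents zero in the quotient, so the
vector is zero. -/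
lemma generic_mul_bijective {e N k m : ℕ} {g : Fin 3 → MvPolynomial (Fin 3) ℂ}
    (hg : ∀ i, (g i).IsHomogeneous e) {c : Fin 3 → Fin 3 → MvPolynomial (Fin 3) ℂ}
    (hc : ∀ i, X i ^ N = ∑ l, c i l * g l) (hke : 2 * k + 2 < e) (hm : m + 2 = k + 1 + e)
    {J : Ideal (MvPolynomial (Fin 3) ℂ)} (hJ : J = Ideal.span (Set.range g))
    (hdim : finrank ℂ (gradedPiece J m) = finrank ℂ (gradedPiece J (m + 2))) :
    ∃ P : MvPolynomial (Fin 3) ℂ, P ≠ 0 ∧ ∀ c : Fin 3 → ℂ, eval c P ≠ 0 →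
      (∀ v ∈ gradedPiece J m,
        (Ideal.Quotient.mk J (∑ j, MvPolynomial.C (c j) * X j)) ^ 2 * v = 0 → v = 0) ∧
      (∀ w ∈ gradedPiece J (m + 2), ∃ v ∈ gradedPiece J m,
        (Ideal.Quotient.mk J (∑ j, MvPolynomial.C (c j) * X j)) ^ 2 * v = w) := by
  have hfin : ∀ n, Module.Finite ℂ (gradedPiece J n) := fun n =>
    Module.Finite.iff_fg.2 ((homogeneousSubmodule_fg _ _ _).map _)
  let b₁ := finBasis ℂ (gradedPiece J m)
  let b₂ := finBasisOfFinrankEq ℂ (gradedPiece J (m + 2)) hdim.symm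
  have hmem : ∀ {n p}, p ∈ gradedPiece J n ↔ ∃ q : MvPolynomial (Fin 3) ℂ, q.IsHomogeneous n ∧
      Ideal.Quotient.mk J q = p := Iff.rfl
  choose h hh hhb using fun j => hmem.1 (b₁ j).2
  choose q hq hqb using fun j => hmem.1 (b₂ j).2
  have hT : ∀ a b j, Ideal.Quotient.mk J (X a * X b * h j) ∈ gradedPiece J (m + 2) :=
    fun a b j => hmem.2 ⟨_, by
      have := ((isHomogeneous_X ℂ a).mul (isHomogeneous_X ℂ b)).mul (hh j)
      rwa [show 1 + 1 + m = m + 2 by omega] at this, rfl⟩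
  -- The matrix of multiplication by `x_a x_b`.
  let t : Fin 3 → Fin 3 → Fin _ → Fin _ → ℂ := fun a b i j =>
    b₂.repr ⟨_, hT a b j⟩ i
  have ht : ∀ a b j, Ideal.Quotient.mk J (X a * X b * h j) = ∑ i, t a b i j • (b₂ i : _ ⧸ J) := by
    intro a b j
    have := congrArg (Submodule.subtype _) (b₂.sum_repr ⟨_, hT a b j⟩)
    rw [map_sum] at this
    exact this.symm
  let M : Matrix (Fin (finrank ℂ (gradedPiece J m))) (Fin (finrank ℂ (gradedPiece J m)))
    (MvPolynomial (Fin 3) ℂ) := fun i j => ∑ a, ∑ b, C (t a b i j) * (X a * X b)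
  have hM : ∀ i j, M i j = ∑ a, ∑ b, C (t a b i j) * (X a * X b) := fun _ _ => rfl
  refine ⟨M.det, ?_, fun c hcP => ?_⟩
  · intro hdet
    have hdet' : (M.map (aeval lineCoeff : MvPolynomial (Fin 3) ℂ →ₐ[ℂ] _)).det = 0 := by
      rw [← AlgHom.mapMatrix_apply, ← AlgHom.map_det, hdet, map_zero]
    obtain ⟨v, hv0, hv⟩ := Matrix.exists_mulVec_eq_zero_iff.2 hdet'
    have hr : ∀ a b j, ∃ r : Fin 3 → MvPolynomial (Fin 3) ℂ, (∀ i, (r i).IsHomogeneous (k + 1)) ∧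
        X a * X b * h j - ∑ i, C (t a b i j) * q i = ∑ l, r l * g l := by
      intro a b j
      refine exists_homogeneous_of_mem_span hg ?_ ?_
      · rw [← hm]
        refine Submodule.sub_mem (homogeneousSubmodule (Fin 3) ℂ (m + 2)) ?_
          (Submodule.sum_mem _ fun i _ => ?_)
        · have := ((isHomogeneous_X ℂ a).mul (isHomogeneous_X ℂ b)).mul (hh j)
          rwa [show 1 + 1 + m = m + 2 by omega] at this
        · rw [← smul_eq_C_mul]
          exact Submodule.smul_mem _ _ (hq i)
      · rw [← hJ, ← Ideal.Quotient.eq_zero_iff_mem, map_sub, ht, map_sum, sub_eq_zero]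
        refine Finset.sum_congr rfl fun i _ => ?_
        rw [← hqb, ← smul_eq_C_mul]
        rfl
    choose r hrh hr using hr
    -- The coefficient of `x_a x_b h_j` in `ℓ ^ 2 ∑ v_j h_j`.
    let μ : Fin 3 → Fin 3 → Fin (finrank ℂ (gradedPiece J m)) → MvPolynomial (Fin 2) ℂ :=
      fun a b j => lineCoeff a * lineCoeff b * v j
    have hz : ∀ i, ∑ j, ∑ a, ∑ b, C (t a b i j) * μ a b j = 0 := by
      intro i
      have := congrFun hv i
      simp only [Matrix.mulVec, dotProduct, Matrix.map_apply, hM, map_sum, map_mul, aeval_X,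
        Finset.sum_mul, Pi.zero_apply, algHom_C, algebraMap_eq] at this
      rw [← this]
      simp only [μ, mul_assoc]
    have hcore := mem_of_sq_mul_mem hg hc
      (h := ∑ j, Polynomial.C (paramHom (v j)) * toPencil (h j))
      (a := fun l => ∑ j, ∑ a, ∑ b, Polynomial.C (paramHom (μ a b j)) * toPencil (r a b j l))
      (k := k) ?_ ?_ ?_ hke
    · obtain ⟨b, hb⟩ := hcore
      apply hv0
      funext j
      refine MvPolynomial.funext fun y => ?_
      have h1 := congrArg (fun p => Ideal.Quotient.mk J (fiberHom y p)) hb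
      simp only [map_sum, map_mul, fiberHom_toPencil, fiberHom_paramHom, hhb] at h1
      have h2 : ∀ l, Ideal.Quotient.mk J (g l) = 0 := fun l =>
        Ideal.Quotient.eq_zero_iff_mem.2 (hJ ▸ Ideal.subset_span ⟨l, rfl⟩)
      simp only [h2, mul_zero, Finset.sum_const_zero] at h1
      have h3 : ∑ j, eval y (v j) • b₁ j = 0 := by
        apply Subtype.ext
        rw [Submodule.coe_zero, ← h1]
        simp only [Submodule.coe_sum, Submodule.coe_smul]
        refine Finset.sum_congr rfl fun i _ => ?_
        rw [← hhb, ← map_mul, ← smul_eq_C_mul]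
        rfl
      simpa using Fintype.linearIndependent_iff.1 b₁.linearIndependent _ h3 j
    · have h1 : ∀ a b j, toPencil (X a) * toPencil (X b) * toPencil (h j) =
          ∑ i, Polynomial.C (C (t a b i j)) * toPencil (q i) +
            ∑ l, toPencil (r a b j l) * toPencil (g l) := by
        intro a b j
        have := congrArg toPencil (sub_eq_iff_eq_add'.1 (hr a b j))
        simpa [map_sum, map_mul, algHom_C, Polynomial.algebraMap_apply, algebraMap_eq] using this
      rw [← sum_lineCoeff]
      calc _ = ∑ j, ∑ a, ∑ b, Polynomial.C (paramHom (μ a b j)) *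
            (toPencil (X a) * toPencil (X b) * toPencil (h j)) := by
            rw [sq, Finset.sum_mul_sum, Finset.mul_sum]
            refine Finset.sum_congr rfl fun j _ => ?_
            simp only [Finset.sum_mul]
            refine Finset.sum_congr rfl fun a _ => Finset.sum_congr rfl fun b _ => ?_
            simp only [μ, map_mul]
            ring
        _ = ∑ i, Polynomial.C (paramHom (∑ j, ∑ a, ∑ b, C (t a b i j) * μ a b j)) *
              toPencil (q i) +
            ∑ l, (∑ j, ∑ a, ∑ b, Polynomial.C (paramHom (μ a b j)) * toPencil (r a b j l)) *
              toPencil (g l) := by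
            simp only [h1, mul_add, Finset.sum_add_distrib, Finset.mul_sum, Finset.sum_mul,
              map_sum]
            congr 1
            · rw [sum_rotate]
              refine Finset.sum_congr rfl fun i _ => Finset.sum_congr rfl fun j _ =>
                Finset.sum_congr rfl fun a _ => Finset.sum_congr rfl fun b _ => ?_
              simp only [map_mul, algHom_C, algebraMap_eq, μ]
              ring
            · rw [sum_rotate]
              refine Finset.sum_congr rfl fun i _ => Finset.sum_congr rfl fun j _ =>
                Finset.sum_congr rfl fun a _ => Finset.sum_congr rfl fun b _ => ?_
              ring
        _ = _ := by simp [hz]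
    · intro l
      simp only [Polynomial.eval_finsetSum, Polynomial.eval_mul, Polynomial.eval_C, eval_toPencil]
      refine wdeg_sum_le _ fun j _ => wdeg_sum_le _ fun a _ => wdeg_sum_le _ fun b _ => ?_
      rw [← zero_add (k + 1)]
      exact wdeg_mul_le (wdeg_paramHom _) (wdeg_toLine_le (hrh a b j l))
    · intro l
      simp only [Polynomial.derivative_sum, Polynomial.derivative_C_mul, derivative_toPencil,
        Polynomial.eval_finsetSum, Polynomial.eval_mul, Polynomial.eval_C, eval_toPencil]
      refine wdeg_sum_le _ fun j _ => wdeg_sum_le _ fun a _ => wdeg_sum_le _ fun b _ => ?_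
      rw [← zero_add k]
      exact wdeg_mul_le (wdeg_paramHom _) (wdeg_toLine_le (hrh a b j l).pderiv)
  · have hdet : (M.map (eval c)).det ≠ 0 := by
      rwa [← RingHom.mapMatrix_apply, ← RingHom.map_det]
    have hcol : ∀ j, Ideal.Quotient.mk J (∑ j, C (c j) * X j) ^ 2 * (b₁ j : _ ⧸ J) =
        ∑ i, M.map (eval c) i j • (b₂ i : _ ⧸ J) := by
      intro j
      have h1 : (∑ j, C (c j) * X j) ^ 2 * h j =
          ∑ a, ∑ b, (c a * c b) • (X a * X b * h j) := by
        rw [sq, Finset.sum_mul_sum]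
        simp only [Finset.sum_mul]
        refine Finset.sum_congr rfl fun a _ => Finset.sum_congr rfl fun b _ => ?_
        rw [smul_eq_C_mul, map_mul]
        ring
      have h2 : ∀ (z : ℂ) p, Ideal.Quotient.mk J (z • p) = z • Ideal.Quotient.mk J p :=
        fun _ _ => rfl
      rw [← hhb, ← map_pow, ← map_mul, h1]
      simp only [map_sum, h2, ht, Finset.smul_sum, Matrix.map_apply, hM, Finset.sum_smul, map_mul,
        eval_C, eval_X, smul_smul]
      have h3 := sum_rotate (ι := Fin 1) fun a b _ i => (c a * c b * t a b i j) • (b₂ i : _ ⧸ J)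
      simp only [Finset.univ_unique, Finset.sum_singleton] at h3
      rw [h3]
      refine Finset.sum_congr rfl fun i _ => Finset.sum_congr rfl fun a _ =>
        Finset.sum_congr rfl fun b _ => ?_
      rw [mul_comm]
    have hvec : ∀ v, Ideal.Quotient.mk J (∑ j, C (c j) * X j) ^ 2 *
        ((∑ j, v j • b₁ j : gradedPiece J m) : _ ⧸ J) =
          ((∑ i, (M.map (eval c)).mulVec v i • b₂ i : gradedPiece J (m + 2)) : _ ⧸ J) := by
      intro v
      simp only [Submodule.coe_sum, Submodule.coe_smul, Finset.mul_sum, mul_smul_comm, hcol,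
        Matrix.mulVec, dotProduct, Finset.sum_smul, Finset.smul_sum, smul_smul]
      rw [Finset.sum_comm]
      refine Finset.sum_congr rfl fun i _ => Finset.sum_congr rfl fun j _ => ?_
      rw [mul_comm]
    constructor
    · intro v hv hv0
      have h1 := b₁.sum_repr ⟨v, hv⟩
      have h2 := hvec (b₁.repr ⟨v, hv⟩)
      rw [h1, hv0] at h2
      have h3 := Matrix.eq_zero_of_mulVec_eq_zero hdet (funext
        (Fintype.linearIndependent_iff.1 b₂.linearIndependent _ (Subtype.ext h2.symm)))
      rw [h3] at h1
      simpa using (congrArg Subtype.val h1).symm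
    · intro w hw
      refine ⟨_, (∑ j, ((M.map (eval c))⁻¹.mulVec (b₂.repr ⟨w, hw⟩)) j • b₁ j).2, ?_⟩
      rw [hvec, Matrix.mulVec_mulVec, Matrix.mul_nonsing_inv _ (isUnit_iff_ne_zero.2 hdet),
        Matrix.one_mulVec, b₂.sum_repr]

/-- **Proposition.** Let `d = 2d'` with `d' ≥ 2` and let `V(f) ⊂ ℙ^2` be a smooth plane
curve of degree `d`.  Then for a generic linear form `ℓ = c₀x₀ + c₁x₁ + c₂x₂` (all `c`
outside the zero locus of some nonzero polynomial `P` in the coefficients — in particular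
for at least one `ℓ`, since `ℂ` is infinite) multiplication by `ℓ²` induces an isomorphism
`M(f)_{3d'-4} → M(f)_{3d'-2}` of `ℂ`-vector spaces. -/
theorem generic_square_mult_iso_on_milnor_pieces
    {d' : ℕ} (hd' : 2 ≤ d')
    (f : MvPolynomial (Fin 3) ℂ) (hf : f.IsHomogeneous (2 * d'))
    (hsm : ∀ x : Fin 3 → ℂ, x ≠ 0 → ∃ i : Fin 3, eval x (pderiv i f) ≠ 0) :
    ∃ P : MvPolynomial (Fin 3) ℂ, P ≠ 0 ∧
      ∀ c : Fin 3 → ℂ, eval c P ≠ 0 →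
        (∀ v ∈ gradedPiece (jacobianIdeal f) (3 * d' - 4),
          (Ideal.Quotient.mk (jacobianIdeal f) (∑ j, MvPolynomial.C (c j) * X j)) ^ 2 * v = 0 →
            v = 0) ∧
        (∀ w ∈ gradedPiece (jacobianIdeal f) (3 * d' - 2),
          ∃ v ∈ gradedPiece (jacobianIdeal f) (3 * d' - 4),
            (Ideal.Quotient.mk (jacobianIdeal f) (∑ j, MvPolynomial.C (c j) * X j)) ^ 2 * v
              = w) := by
  obtain ⟨N, c, hc⟩ := exists_X_pow_eq hsm
  have hg : ∀ i, (pderiv i f).IsHomogeneous (2 * d' - 1) := fun i => hf.pderiv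
  rw [show 3 * d' - 2 = 3 * d' - 4 + 2 by omega]
  exact generic_mul_bijective (k := d' - 2) hg hc (by omega) (by omega) rfl
    (finrank_gradedPiece_eq hd' hg hc)
end
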